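/- arXiv:1510.08711 — 4 statements merged into one kernel-verified Lean document; each statement's English description precedes it below -/
import Mathlib

section
/- A division ring D is weakly locally finite if and only if D, regarded as an algebra over its center, is a locally PI algebra. -/
/-- A division ring is *centrally finite* if it is a finite-dimensional
vector space over its own center. -/
def IsCentrallyFinite (E : Type*) [DivisionRing E] : Prop :=
  Module.Finite (Subring.center E) E

/-- A division ring is *weakly locally finite* if for every finite subset `S`,
the division subring generated by `S` is centrally finite. -/
def IsWeaklyLocallyFinite (D : Type*) [DivisionRing D] : Prop :=
  ∀ S : Finset D, IsCentrallyFinite (Subfield.closure (S : Set D))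

/-- `A` is a PI algebra over `k`: some nonzero noncommutative polynomial in `m ≥ 1`
variables over `k` vanishes identically on `A`. -/
def IsPIAlgebra (k A : Type*) [CommSemiring k] [Semiring A] [Algebra k A] : Prop :=
  ∃ m : ℕ, 0 < m ∧ ∃ f : FreeAlgebra k (Fin m), f ≠ 0 ∧
    ∀ v : Fin m → A, FreeAlgebra.lift k v f = 0

/-- `A` is locally PI over `k` if every finitely generated `k`-subalgebra of `A`
is a PI algebra. -/
def IsLocallyPI (k A : Type*) [CommRing k] [Ring A] [Algebra k A] : Prop :=
  ∀ S : Finset A, IsPIAlgebra k (Algebra.adjoin k (S : Set A))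

/-!
If a division ring `D` is generated by a subring `A` with a multilinear identity, then `D` satisfies
the same identity: in each variable separately the identity reads `∑ aᵢ x bᵢ = 0`, the tuples `a`
with this property for all `x ∈ A` form a left subspace of `Dⁿ` stable under right multiplication by
`A`, and, being finite-dimensional, this subspace is also stable under the inverses of nonzero
elements of `A`. Linearizing a polynomial identity of a finitely generated subalgebra thus gives a
multilinear identity with central coefficients for the division ring it generates, which is
centrally finite by Kaplansky's theorem. Conversely, a centrally finite division ring satisfies a
standard identity. Its coefficients are `±1`, so by multilinearity it passes to spans over any
commutative ring of scalars and to all division subrings.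

For Kaplansky's theorem, let `L` be a maximal subfield of a division ring `Q` with center `Z`. Then
`Q` is a simple `Q ⊗ L`-module with commutative endomorphism ring `N`, and `Q ⊗ L` satisfies the
multilinear identities of `Q`. By Jacobson density `Q ⊗ L` contains elements acting as the matrix
units `Eᵢ,ᵢ₊₁`, which violate the identity unless `Q` is finite-dimensional over `N`. By density of
`Q ⊗ Qᵐᵒᵖ`, left multiplications by elements independent over `Z` are independent over `N`, so `Q`
is finite-dimensional over `Z` as well.
-/

open Finset

section Polarization

lemma sum_surjective_eq_sum_compl {R ι κ M N : Type*} [Semiring R] [AddCommMonoid M]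
    [AddCommGroup N] [Module R M] [Module R N] [Fintype ι] [DecidableEq ι] [Fintype κ]
    [DecidableEq κ] (φ : MultilinearMap R (fun _ : ι => M) N) (z : ι → κ → M) :
    ∑ r : ι → κ with Function.Surjective r, φ (fun j => z j (r j)) =
      ∑ t : Finset κ, (-1) ^ #t • φ (fun j => ∑ k ∈ tᶜ, z j k) := by
  let avoiding (k : κ) : Finset (ι → κ) := Fintype.piFinset fun _ => {k}ᶜ
  have surjective_iff : ({r | Function.Surjective r} : Finset (ι → κ)) =
      univ.inf fun k => (avoiding k)ᶜ := by
    ext r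
    rw [mem_filter_univ, Finset.mem_inf]
    simp [avoiding, Function.Surjective]
  have inf_avoiding (t : Finset κ) : t.inf avoiding = Fintype.piFinset fun _ => tᶜ := by
    ext r
    simp only [avoiding, Finset.mem_inf, Fintype.mem_piFinset, mem_compl, mem_singleton]
    exact ⟨fun h j hj => h _ hj j rfl, fun h k hk j hj => h j (hj ▸ hk)⟩
  rw [surjective_iff, inclusion_exclusion_sum_inf_compl, powerset_univ]
  exact sum_congr rfl fun t _ => by rw [inf_avoiding, ← φ.map_sum_finset]

lemma sum_surjective_eq_sum_perm {α N : Type*} [Fintype α] [DecidableEq α] [AddCommMonoid N]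
    (F : (α → α) → N) :
    ∑ r : α → α with Function.Surjective r, F r = ∑ σ : Equiv.Perm α, F σ :=
  (sum_nbij (fun σ : Equiv.Perm α => ⇑σ) (fun σ _ => by simpa using σ.surjective)
    (fun σ _ τ _ h => DFunLike.coe_injective h)
    (fun r hr => ⟨Equiv.ofBijective r
      (Finite.surjective_iff_bijective.1 (mem_filter.1 hr).2), by simp⟩) fun _ _ => rfl).symm

lemma prod_ofFn_ite_eq {A : Type*} [MonoidWithZero A] {n : ℕ} (P : Fin n → Prop)
    [DecidablePred P] (x : Fin n → A) :
    (List.ofFn fun i => if P i then x i else 0).prod =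
      if ∀ i, P i then (List.ofFn x).prod else 0 := by
  split_ifs with h
  · simp only [h, if_true]
  · obtain ⟨i, hi⟩ := not_forall.1 h
    exact List.prod_eq_zero ((List.mem_ofFn' _ _).2 ⟨i, if_neg hi⟩)

-- Inclusion-exclusion over the set of omitted indices keeps only the words in which every
-- index is used.
lemma sum_compl_prod_map_eq_sum_perm {X A : Type*} [DecidableEq X] [Ring A] {n : ℕ}
    (g : Fin n → X) (y : Fin n → A) {w : List X} (hw : w.length ≤ n) :
    ∑ t : Finset (Fin n), (-1) ^ #t •
        (w.map fun a => ∑ i ∈ tᶜ, if g i = a then y i else 0).prod =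
      ∑ σ : Equiv.Perm (Fin n),
        if w = List.ofFn (g ∘ σ) then (List.ofFn (y ∘ σ)).prod else 0 := by
  obtain ⟨m, u, rfl⟩ : ∃ m, ∃ u : Fin m → X, w = List.ofFn u :=
    ⟨_, w.get, (List.ofFn_get w).symm⟩
  have polarized := sum_surjective_eq_sum_compl (MultilinearMap.mkPiAlgebraFin ℤ m A)
    fun j i => if g i = u j then y i else 0
  simp only [MultilinearMap.mkPiAlgebraFin_apply, prod_ofFn_ite_eq] at polarized
  simp only [List.map_ofFn, Function.comp_def, ← polarized]
  rw [List.length_ofFn] at hw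
  obtain hlt | rfl := hw.lt_or_eq
  · rw [sum_eq_zero fun r hr => ?_, sum_eq_zero fun σ _ => if_neg fun h => ?_]
    · simpa using hlt.ne (by simpa using congrArg List.length h)
    · exact absurd (Fintype.card_le_of_surjective r (mem_filter.1 hr).2) (by simpa using hlt)
  · rw [sum_surjective_eq_sum_perm]
    simp only [List.ofFn_inj, funext_iff, eq_comm]

end Polarization

section MultilinearEval

variable {k : Type*} [CommSemiring k] {n : ℕ}

/-- The map `Aⁿ → A` given by evaluating the multilinear noncommutative polynomial
`∑ σ, c σ • X (σ 0) * ⋯ * X (σ (n - 1))`; `c` is a *multilinear identity* of `A` when this map is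
zero. -/
def multilinearEval (A : Type*) [Semiring A] [Algebra k A] (c : Equiv.Perm (Fin n) → k) :
    MultilinearMap k (fun _ : Fin n => A) A :=
  ∑ σ, c σ • (MultilinearMap.mkPiAlgebraFin k n A).domDomCongr σ

lemma multilinearEval_apply {A : Type*} [Semiring A] [Algebra k A] (c : Equiv.Perm (Fin n) → k)
    (v : Fin n → A) : multilinearEval A c v = ∑ σ, c σ • (List.ofFn (v ∘ σ)).prod := by
  simp [multilinearEval, Function.comp_def]

lemma map_multilinearEval {k' A B : Type*} [CommSemiring k'] [Semiring A] [Algebra k A]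
    [Semiring B] [Algebra k' B] (φ : A →+* B) {c : Equiv.Perm (Fin n) → k}
    {c' : Equiv.Perm (Fin n) → k'} (hc : ∀ σ a, φ (c σ • a) = c' σ • φ a) (v : Fin n → A) :
    φ (multilinearEval A c v) = multilinearEval B c' (φ ∘ v) := by
  simp only [multilinearEval_apply, map_sum, hc, map_list_prod, List.map_ofFn, Function.comp_assoc]

end MultilinearEval

section Linearization

lemma basisFreeMonoid_apply (k X : Type*) [CommSemiring k] (w : FreeMonoid X) :
    FreeAlgebra.basisFreeMonoid k X w = (w.toList.map (FreeAlgebra.ι k)).prod := by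
  simp [FreeAlgebra.basisFreeMonoid, FreeAlgebra.equivMonoidAlgebraFreeMonoid,
    FreeMonoid.lift_apply]

lemma freeAlgebraLift_eq_sum {k X A : Type*} [CommSemiring k] [Semiring A] [Algebra k A]
    (x : X → A) (f : FreeAlgebra k X) :
    FreeAlgebra.lift k x f =
      ((FreeAlgebra.basisFreeMonoid k X).repr f).sum fun w a => a • (w.toList.map x).prod := by
  conv_lhs => rw [← (FreeAlgebra.basisFreeMonoid k X).linearCombination_repr f,
    Finsupp.linearCombination_apply, map_finsuppSum]
  simp only [map_smul, basisFreeMonoid_apply, map_list_prod, List.map_map, Function.comp_def,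
    FreeAlgebra.lift_ι_apply]

theorem exists_multilinearEval_eq_zero {k X A : Type*} [CommRing k] [Ring A] [Algebra k A]
    {f : FreeAlgebra k X} (hf : f ≠ 0) (h : ∀ x : X → A, FreeAlgebra.lift k x f = 0) :
    ∃ (n : ℕ) (c : Equiv.Perm (Fin n) → k), c ≠ 0 ∧ multilinearEval A c = 0 := by
  classical
  set coeff := (FreeAlgebra.basisFreeMonoid k X).repr f with hcoeff
  obtain ⟨w₀, hw₀, longest⟩ := coeff.support.exists_max_image (fun w => w.toList.length)
    (by simpa [hcoeff] using hf)
  let g := w₀.toList.get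
  let word (σ : Equiv.Perm _) : FreeMonoid X := FreeMonoid.ofList (List.ofFn (g ∘ σ))
  refine ⟨_, fun σ => coeff (word σ),
    Function.ne_iff.2 ⟨1, by simpa [g, word] using hw₀⟩, MultilinearMap.ext fun y => ?_⟩
  let x (t : Finset _) (a : X) : A := ∑ i ∈ tᶜ, if g i = a then y i else 0
  have smul_word (σ : Equiv.Perm _) : coeff (word σ) • (List.ofFn (y ∘ σ)).prod =
      ∑ w ∈ coeff.support, coeff w •
        (if w.toList = List.ofFn (g ∘ σ) then (List.ofFn (y ∘ σ)).prod else 0) := by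
    have eq_iff (w : FreeMonoid X) : w.toList = List.ofFn (g ∘ σ) ↔ word σ = w := eq_comm
    simp +contextual [eq_iff]
  calc multilinearEval A _ y
    _ = ∑ w ∈ coeff.support, coeff w • ∑ σ : Equiv.Perm _,
          if w.toList = List.ofFn (g ∘ σ) then (List.ofFn (y ∘ σ)).prod else 0 := by
      simp only [multilinearEval_apply, smul_word, smul_sum]
      exact sum_comm
    _ = ∑ w ∈ coeff.support, coeff w • ∑ t : Finset _, (-1) ^ #t • (w.toList.map (x t)).prod :=
      sum_congr rfl fun w hw => by rw [sum_compl_prod_map_eq_sum_perm g y (longest w hw)]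
    _ = ∑ t : Finset _, (-1) ^ #t • FreeAlgebra.lift k (x t) f := by
      simp only [freeAlgebraLift_eq_sum, Finsupp.sum, smul_sum]
      rw [sum_comm]
      exact sum_congr rfl fun t _ => sum_congr rfl fun w _ => smul_comm _ _ _
    _ = 0 := by simp [h]

end Linearization

section Restriction

variable {k k' A B : Type*} [CommSemiring k] [CommSemiring k'] [Semiring A] [Algebra k A]
  [Semiring B] [Algebra k' B] {n : ℕ} {φ : A →+* B} {c : Equiv.Perm (Fin n) → k}
  {c' : Equiv.Perm (Fin n) → k'}

lemma multilinearEval_eq_zero_of_injective (hφ : Function.Injective φ)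
    (hc : ∀ σ a, φ (c σ • a) = c' σ • φ a)
    (h : ∀ v : Fin n → B, (∀ i, v i ∈ φ.rangeS) → multilinearEval B c' v = 0) :
    multilinearEval A c = 0 := by
  ext v
  apply hφ
  rw [map_multilinearEval φ hc, zero_apply, map_zero]
  exact h _ fun i => ⟨v i, rfl⟩

lemma multilinearEval_eq_zero_of_mem_range (hc : ∀ σ a, φ (c σ • a) = c' σ • φ a)
    (h : multilinearEval A c = 0) {v : Fin n → B} (hv : ∀ i, v i ∈ φ.rangeS) :
    multilinearEval B c' v = 0 := by
  choose u hu using hv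
  obtain rfl : φ ∘ u = v := funext hu
  rw [← map_multilinearEval φ hc, h, zero_apply, map_zero]

end Restriction

section Extension

open Function (update)

lemma forall_mem_of_forall_update {ι α : Type*} [Finite ι] [DecidableEq ι] {s t : Set α}
    {p : (ι → α) → Prop}
    (extend : ∀ v i, (∀ x ∈ s, p (update v i x)) → ∀ x ∈ t, p (update v i x))
    (hs : ∀ v, (∀ i, v i ∈ s) → p v) (v : ι → α) (hv : ∀ i, v i ∈ t) : p v := by
  have := Fintype.ofFinite ι
  suffices ∀ (u : Finset ι) (v : ι → α), (∀ i ∈ u, v i ∈ t) → (∀ i ∉ u, v i ∈ s) → p v from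
    this univ v (fun i _ => hv i) (by simp)
  intro u
  induction u using Finset.induction_on with
  | empty => exact fun v _ hv => hs v (by simpa using hv)
  | insert i u hi ih =>
    intro v ht hs
    rw [← Function.update_eq_self i v]
    refine extend v i (fun x hx => ih _ (fun j hj => ?_) fun j hj => ?_) _
      (ht i (mem_insert_self i u))
    · rw [Function.update_of_ne (ne_of_mem_of_not_mem hj hi)]
      exact ht j (mem_insert_of_mem hj)
    · obtain rfl | hji := eq_or_ne j i
      · rwa [Function.update_self]
      · rw [Function.update_of_ne hji]
        exact hs j (by simp [hji, hj])

lemma multilinearMap_eq_zero_of_mem_span {R ι M N : Type*} [Semiring R] [AddCommMonoid M]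
    [AddCommMonoid N] [Module R M] [Module R N] [Finite ι] (φ : MultilinearMap R (fun _ : ι => M) N)
    {s : Set M} (h : ∀ v, (∀ i, v i ∈ s) → φ v = 0) {v : ι → M}
    (hv : ∀ i, v i ∈ Submodule.span R s) : φ v = 0 := by
  classical
  refine forall_mem_of_forall_update (p := fun v => φ v = 0) (t := Submodule.span R s)
    (fun v i hs x hx => ?_) h v hv
  have : Submodule.span R s ≤ (φ.toLinearMap v i).ker := Submodule.span_le.2 hs
  exact this hx

variable {D : Type*} [DivisionRing D]

/-- The division subring of those `q` for which coordinatewise right multiplication by `q` maps the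
left subspace `N` of `ι → D` into itself. Right multiplication is encoded as the action of
`MulOpposite.op q`. -/
def rightStabilizer {ι : Type*} [Finite ι] (N : Submodule D (ι → D)) : Subfield D where
  carrier := {q | ∀ a ∈ N, MulOpposite.op q • a ∈ N}
  mul_mem' hp hq a ha := by simpa [mul_smul] using hq _ (hp a ha)
  one_mem' a ha := by simpa using ha
  add_mem' hp hq a ha := by simpa [add_smul] using N.add_mem (hp a ha) (hq a ha)
  zero_mem' a _ := by simp
  neg_mem' hq a ha := by simpa using N.neg_mem (hq a ha)
  inv_mem' q hq a ha := by
    -- Right multiplication by `q ≠ 0` is injective on the finite-dimensional space `N`, so it is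
    -- surjective and its inverse preserves `N`.
    obtain rfl | hq₀ := eq_or_ne q 0
    · simp
    let mulRight : N →ₗ[D] N :=
      { toFun b := ⟨MulOpposite.op q • b.1, hq _ b.2⟩
        map_add' _ _ := Subtype.ext (smul_add _ _ _)
        map_smul' d b := Subtype.ext (smul_comm _ d b.1) }
    have mulRight_injective : Function.Injective mulRight := fun b b' h =>
      Subtype.ext (smul_right_injective _ (by simpa using hq₀) (congrArg Subtype.val h))
    obtain ⟨b, hb⟩ := LinearMap.injective_iff_surjective.1 mulRight_injective ⟨a, ha⟩
    obtain rfl : MulOpposite.op q • b.1 = a := congrArg Subtype.val hb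
    rw [MulOpposite.op_inv, inv_smul_smul₀ (by simpa using hq₀)]
    exact b.2

lemma sum_mul_mul_eq_zero_of_mem_closure {ι : Type*} [Fintype ι] {A : Submonoid D} {a b : ι → D}
    (h : ∀ x ∈ A, ∑ i, a i * x * b i = 0) {x : D} (hx : x ∈ Subfield.closure (A : Set D)) :
    ∑ i, a i * x * b i = 0 := by
  let N : Submodule D (ι → D) :=
    { carrier := {a | ∀ x ∈ A, ∑ i, a i * x * b i = 0}
      zero_mem' := by simp
      add_mem' := fun ha ha' x hx => by simp [add_mul, sum_add_distrib, ha x hx, ha' x hx]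
      smul_mem' := fun d a ha x hx => by simp [mul_assoc d, ← mul_sum, ha x hx] }
  have le_stabilizer : Subfield.closure (A : Set D) ≤ rightStabilizer N :=
    Subfield.closure_le.2 fun q hq a ha x hx => by
      simpa [mul_assoc] using ha (q * x) (A.mul_mem hq hx)
  simpa using le_stabilizer hx a h 1 A.one_mem

lemma exists_prod_map_update_eq {ι M : Type*} [Monoid M] [DecidableEq ι] {l : List ι}
    (hl : l.Nodup) {i : ι} (hi : i ∈ l) (v : ι → M) :
    ∃ a b, ∀ x, (l.map (update v i x)).prod = a * x * b := by
  obtain ⟨l₁, l₂, rfl⟩ := List.append_of_mem hi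
  refine ⟨(l₁.map v).prod, (l₂.map v).prod, fun x => ?_⟩
  have map_update {l : List ι} (h : i ∉ l) : l.map (update v i x) = l.map v :=
    List.map_congr_left fun j hj => Function.update_of_ne (ne_of_mem_of_not_mem hj h) _ _
  rw [List.nodup_middle, List.nodup_cons, List.mem_append, not_or] at hl
  rw [List.map_append, List.map_cons, map_update hl.1.1, map_update hl.1.2, Function.update_self,
    List.prod_append, List.prod_cons, mul_assoc]

theorem multilinearEval_eq_zero_of_mem_closure {k : Type*} [CommSemiring k] [Algebra k D] {n : ℕ}
    {c : Equiv.Perm (Fin n) → k} {A : Submonoid D}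
    (h : ∀ v, (∀ i, v i ∈ A) → multilinearEval D c v = 0) {v : Fin n → D}
    (hv : ∀ i, v i ∈ Subfield.closure (A : Set D)) : multilinearEval D c v = 0 := by
  refine forall_mem_of_forall_update (p := fun v => multilinearEval D c v = 0)
    (t := Subfield.closure (A : Set D)) (fun v i hA x hx => ?_) h v hv
  have monomial_eq (σ : Equiv.Perm (Fin n)) :
      ∃ a b, ∀ x, (List.ofFn (update v i x ∘ σ)).prod = a * x * b := by
    simpa only [List.map_ofFn] using exists_prod_map_update_eq (List.nodup_ofFn.2 σ.injective)
      ((List.mem_ofFn' _ _).2 ⟨σ⁻¹ i, σ.apply_symm_apply i⟩) v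
  choose a b hab using monomial_eq
  have eval_eq (x : D) : multilinearEval D c (update v i x) = ∑ σ, (c σ • a σ) * x * b σ := by
    simp only [multilinearEval_apply, hab, smul_mul_assoc]
  simp only [eval_eq] at hA ⊢
  exact sum_mul_mul_eq_zero_of_mem_closure hA hx

end Extension

section Staircase

lemma prod_ofFn_smul_staircase {R M : Type*} [Semiring R] [AddCommMonoid M] [Module R M] {n : ℕ}
    {r : Fin n → R} {e : ℕ → M}
    (hr : ∀ i j : Fin n, r i • e (j + 1) = if i = j then e j else 0) {m : ℕ} (hm : m ≤ n)
    (τ : Fin m → Fin n) :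
    (List.ofFn (r ∘ τ)).prod • e m = if ∀ i, (τ i : ℕ) = i then e 0 else 0 := by
  induction m with
  | zero => simp
  | succ m ih =>
    have last := hr (τ (Fin.last m)) ⟨m, hm⟩
    rw [List.ofFn_succ', List.prod_concat, mul_smul, Function.comp_apply, last]
    have initial_smul := ih (by lia) (τ ∘ Fin.castSucc)
    simp only [Function.comp_apply, Function.comp_def] at initial_smul
    simp only [Fin.forall_fin_succ', Fin.val_last, Fin.val_castSucc, Fin.ext_iff,
      Function.comp_apply]
    by_cases hlast : (τ (Fin.last m) : ℕ) = m <;> simp [hlast, initial_smul]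

lemma multilinearEval_smul_staircase {k R M : Type*} [CommSemiring k] [Semiring R] [Algebra k R]
    [AddCommMonoid M] [Module k M] [Module R M] [IsScalarTower k R M] {n : ℕ}
    (c : Equiv.Perm (Fin n) → k) (σ : Equiv.Perm (Fin n)) {r : Fin n → R} {e : ℕ → M}
    (hr : ∀ i j : Fin n, r i • e (j + 1) = if i = j then e j else 0) :
    multilinearEval R c (r ∘ σ.symm) • e n = c σ • e 0 := by
  have eq_iff (τ : Equiv.Perm (Fin n)) : (∀ i, ((σ.symm ∘ τ) i : ℕ) = i) ↔ τ = σ := by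
    simp only [Function.comp_apply, Fin.val_inj, Equiv.symm_apply_eq, Equiv.ext_iff]
  simp only [multilinearEval_apply, sum_smul, smul_assoc, Function.comp_assoc,
    prod_ofFn_smul_staircase hr le_rfl, eq_iff, smul_ite, smul_zero, sum_ite_eq', mem_univ, if_true]

theorem finite_moduleEnd_of_multilinearEval_eq_zero {k R M : Type*} [Field k] [Ring R] [Algebra k R]
    [AddCommGroup M] [Module k M] [Module R M] [IsScalarTower k R M] [IsSimpleModule R M] {n : ℕ}
    {c : Equiv.Perm (Fin n) → k} (hc : c ≠ 0) (h : multilinearEval R c = 0) :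
    Module.Finite (Module.End R M) M := by
  classical
  obtain ⟨σ, hσ⟩ := Function.ne_iff.1 hc
  let b := Module.Basis.ofVectorSpace (Module.End R M) M
  by_contra not_finite
  have : Infinite (Module.Basis.ofVectorSpaceIndex (Module.End R M) M) :=
    not_finite_iff_infinite.1 fun _ => not_finite (.of_basis b)
  let index := Infinite.natEmbedding (Module.Basis.ofVectorSpaceIndex (Module.End R M) M)
  let e (j : ℕ) : M := b (index j)
  let shift (i : Fin n) : Module.End (Module.End R M) M :=
    b.constr ℕ fun x => if x = index (i + 1) then e i else 0
  have shift_apply (i j : Fin n) : shift i (e (j + 1)) = if i = j then e j else 0 := by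
    simp only [shift, e, Module.Basis.constr_basis, EmbeddingLike.apply_eq_iff_eq, add_left_inj,
      Fin.val_inj, eq_comm (a := j)]
    split_ifs with hij <;> simp [hij]
  choose r hr using fun i => jacobson_density (shift i) (univ.image fun j : Fin n => e (j + 1))
  have hr' (i j : Fin n) : r i • e (j + 1) = if i = j then e j else 0 := by
    rw [← hr i _ (mem_image_of_mem _ (mem_univ j)), shift_apply]
  have := multilinearEval_smul_staircase c σ hr'
  rw [h, zero_apply, zero_smul, eq_comm, smul_eq_zero_iff_right hσ] at this
  exact b.ne_zero _ this

end Staircase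

section BaseChange

open TensorProduct

variable {k A B : Type*} [CommSemiring k] [Semiring A] [Algebra k A] [CommSemiring B] [Algebra k B]

lemma prod_ofFn_tmul {n : ℕ} (a : Fin n → A) (b : Fin n → B) :
    (List.ofFn fun i => a i ⊗ₜ[k] b i).prod = (List.ofFn a).prod ⊗ₜ ∏ i, b i := by
  induction n with
  | zero => simp [Algebra.TensorProduct.one_def]
  | succ n ih => simp [List.ofFn_succ, Fin.prod_univ_succ, ih]

theorem multilinearEval_tensorProduct_eq_zero {n : ℕ} {c : Equiv.Perm (Fin n) → k}
    (h : multilinearEval A c = 0) : multilinearEval (A ⊗[k] B) c = 0 := by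
  ext v
  refine multilinearMap_eq_zero_of_mem_span (s := {t | ∃ a b, a ⊗ₜ[k] b = t}) _ (fun v hv => ?_)
    fun i => span_tmul_eq_top k A B ▸ Submodule.mem_top
  choose a b hab using hv
  obtain rfl : (fun i => a i ⊗ₜ[k] b i) = v := funext hab
  calc multilinearEval (A ⊗[k] B) c (fun i => a i ⊗ₜ b i)
    _ = ∑ σ, c σ • ((List.ofFn (a ∘ σ)).prod ⊗ₜ[k] ∏ i, b i) := by
      simp only [multilinearEval_apply, Function.comp_def, prod_ofFn_tmul, Equiv.prod_comp _ b]
    _ = multilinearEval A c a ⊗ₜ ∏ i, b i := by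
      simp only [multilinearEval_apply, sum_tmul, smul_tmul']
    _ = 0 := by rw [h, zero_apply, zero_tmul]

end BaseChange

section CentralDivisionAlgebra

open TensorProduct MulOpposite

attribute [local instance] TensorProduct.Algebra.module

section BimoduleEnd

variable {Z Q B : Type*} [CommRing Z] [DivisionRing Q] [Algebra Z Q] [Ring B] [Algebra Z B]
  [Module B Q] [IsScalarTower Z B Q] [SMulCommClass Q B Q]

lemma tmul_one_smul (q x : Q) : (q ⊗ₜ[Z] (1 : B)) • x = q * x := by
  rw [TensorProduct.Algebra.smul_def, one_smul, smul_eq_mul]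

lemma isSimpleModule_tensorProduct : IsSimpleModule (Q ⊗[Z] B) Q :=
  isSimpleModule_iff_toSpanSingleton_surjective.2 ⟨inferInstance, fun x hx y =>
    ⟨(y * x⁻¹) ⊗ₜ 1, by simp [tmul_one_smul, hx]⟩⟩

lemma isScalarTower_tensorProduct : IsScalarTower Z (Q ⊗[Z] B) Q where
  smul_assoc z t x := by
    change TensorProduct.Algebra.moduleAux _ _ = _ • TensorProduct.Algebra.moduleAux _ _
    rw [map_smul, LinearMap.smul_apply]

lemma end_apply_eq_mul (g : Module.End (Q ⊗[Z] B) Q) (x : Q) : g x = x * g 1 := by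
  simpa [tmul_one_smul] using g.map_smul (x ⊗ₜ 1) 1

lemma smul_end_apply_one (g : Module.End (Q ⊗[Z] B) Q) (b : B) : b • g 1 = b • 1 * g 1 := by
  rw [← end_apply_eq_mul]
  simpa [TensorProduct.Algebra.smul_def] using (g.map_smul (1 ⊗ₜ b) 1).symm

end BimoduleEnd

section Density

variable {Z Q : Type*} [CommRing Z] [DivisionRing Q] [Algebra Z Q] [Algebra.IsCentral Z Q]

lemma exists_algebraMap_eq_end_apply_one (g : Module.End (Q ⊗[Z] Qᵐᵒᵖ) Q) :
    ∃ z, algebraMap Z Q z = g 1 := by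
  have : g 1 ∈ Subalgebra.center Z Q := Subalgebra.mem_center_iff.2 fun q => by
    simpa using (smul_end_apply_one g (op q)).symm
  obtain ⟨z, hz⟩ := (Algebra.IsCentral.mem_center_iff Z).1 this
  exact ⟨z, hz.symm⟩

lemma exists_forall_apply_eq_smul (f : Q →ₗ[Z] Q) (s : Finset Q) :
    ∃ t : Q ⊗[Z] Qᵐᵒᵖ, ∀ x ∈ s, f x = t • x := by
  have := isSimpleModule_tensorProduct (Z := Z) (Q := Q) (B := Qᵐᵒᵖ)
  let f' : Module.End (Module.End (Q ⊗[Z] Qᵐᵒᵖ) Q) Q :=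
    { f with
      map_smul' g x := by
        obtain ⟨z, hz⟩ := exists_algebraMap_eq_end_apply_one g
        change f (g x) = g (f x)
        simp [end_apply_eq_mul g x, end_apply_eq_mul g (f x), ← hz, ← Algebra.commutes,
          ← Algebra.smul_def] }
  exact jacobson_density f' s

lemma eq_zero_of_forall_sum_mul_mul_eq_zero {ι : Type*} (b : Module.Basis ι Z Q) {s : Finset ι}
    {w : ι → Q} (h : ∀ x, ∑ i ∈ s, b i * x * w i = 0) {i : ι} (hi : i ∈ s) : w i = 0 := by
  classical
  have sum_smul_mul (t : Q ⊗[Z] Qᵐᵒᵖ) : ∑ j ∈ s, t • b j * w j = 0 := by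
    induction t with
    | zero =>
      exact sum_eq_zero fun j _ => mul_eq_zero_of_left (zero_smul (Q ⊗[Z] Qᵐᵒᵖ) (b j)) (w j)
    | tmul p q =>
      simpa [TensorProduct.Algebra.smul_def, mul_assoc, ← mul_sum] using Or.inr (h q.unop)
    | add t t' ht ht' => simp [add_smul, add_mul, sum_add_distrib, ht, ht']
  obtain ⟨t, ht⟩ := exists_forall_apply_eq_smul (b.constr Z (Pi.single i 1)) (s.image b)
  have smul_basis {j : ι} (hj : j ∈ s) : t • b j = (Pi.single i 1 : ι → Q) j := by
    rw [← ht _ (mem_image_of_mem b hj), b.constr_basis]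
  calc w i = ∑ j ∈ s, (Pi.single i 1 : ι → Q) j * w j := by simp [Pi.single_apply, hi]
    _ = ∑ j ∈ s, t • b j * w j := sum_congr rfl fun j hj => by rw [smul_basis hj]
    _ = 0 := sum_smul_mul t

end Density

theorem exists_centralizer_eq_self (R A : Type*) [CommSemiring R] [Semiring A] [Algebra R A] :
    ∃ L : Subalgebra R A, Subalgebra.centralizer R (L : Set A) = L := by
  obtain ⟨chain, maximal⟩ := maxChain_spec (r := (Commute : A → A → Prop))
  set s := maxChain (Commute : A → A → Prop)
  have commute {x y : A} (hx : x ∈ s) (hy : y ∈ s) : Commute x y := by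
    obtain rfl | hxy := eq_or_ne x y
    · exact Commute.refl x
    · exact (chain hx hy hxy).elim id .symm
  have centralizer_eq : s.centralizer = s := by
    refine subset_antisymm (fun x hx => ?_) fun x hx y hy => commute hy hx
    rw [maximal (chain.insert fun y hy _ => .inr (hx y hy)) (Set.subset_insert x s)]
    exact Set.mem_insert x s
  exact ⟨Subalgebra.centralizer R s, SetLike.coe_injective <| by simp [centralizer_eq]⟩

section Kaplansky

variable {Z Q : Type*} [Field Z] [DivisionRing Q] [Algebra Z Q] [Algebra.IsCentral Z Q]

theorem finite_of_finite_of_smulCommClass (N : Type*) [Field N] [Module N Q] [SMulCommClass N Q Q]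
    [Module.Finite N Q] : Module.Finite Z Q := by
  let b := Module.Basis.ofVectorSpace Z Q
  have mulLeft_linearIndependent : LinearIndependent N fun i => LinearMap.mulLeft N (b i) := by
    rw [linearIndependent_iff']
    intro s c hc i hi
    have : c i • (1 : Q) = 0 := by
      refine eq_zero_of_forall_sum_mul_mul_eq_zero b (w := fun i => c i • 1) (fun x => ?_) hi
      simpa [mul_smul_comm] using LinearMap.congr_fun hc x
    simpa using this
  have := mulLeft_linearIndependent.finite
  exact .of_basis b

theorem finite_of_multilinearEval_eq_zero_of_commute_end {B : Type*} [CommRing B] [Algebra Z B]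
    [Module B Q] [IsScalarTower Z B Q] [SMulCommClass Q B Q]
    (commute_end : ∀ g h : Module.End (Q ⊗[Z] B) Q, Commute g h) {n : ℕ}
    {c : Equiv.Perm (Fin n) → Z} (hc : c ≠ 0) (h : multilinearEval Q c = 0) :
    Module.Finite Z Q := by
  classical
  have := isSimpleModule_tensorProduct (Z := Z) (Q := Q) (B := B)
  have := isScalarTower_tensorProduct (Z := Z) (Q := Q) (B := B)
  let : Field (Module.End (Q ⊗[Z] B) Q) :=
    { Module.End.instDivisionRing with mul_comm := commute_end }
  have : SMulCommClass (Module.End (Q ⊗[Z] B) Q) Q Q :=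
    ⟨fun g q x => by simp [end_apply_eq_mul g (q * x), end_apply_eq_mul g x, mul_assoc]⟩
  have baseChange : multilinearEval (Q ⊗[Z] B) c = 0 := multilinearEval_tensorProduct_eq_zero h
  have := finite_moduleEnd_of_multilinearEval_eq_zero (M := Q) hc baseChange
  exact finite_of_finite_of_smulCommClass (Module.End (Q ⊗[Z] B) Q)

open scoped IsMulCommutative in
theorem finite_of_multilinearEval_eq_zero {n : ℕ} {c : Equiv.Perm (Fin n) → Z} (hc : c ≠ 0)
    (h : multilinearEval Q c = 0) : Module.Finite Z Q := by
  obtain ⟨L, hL⟩ := exists_centralizer_eq_self Z Qᵐᵒᵖ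
  have mem_L_iff (x : Qᵐᵒᵖ) : x ∈ L ↔ ∀ y ∈ L, y * x = x * y := by
    conv_lhs => rw [← hL]
    exact Subalgebra.mem_centralizer_iff Z
  have : IsMulCommutative L := .of_setLike_mul_comm fun x hx y hy => (mem_L_iff y).1 hy x hx
  have end_one_mem (g : Module.End (Q ⊗[Z] L) Q) : op (g 1) ∈ L :=
    (mem_L_iff _).2 fun y hy => unop_injective <| by
      simpa [Subalgebra.smul_def] using smul_end_apply_one g ⟨y, hy⟩
  refine finite_of_multilinearEval_eq_zero_of_commute_end (B := L)
    (fun g h => LinearMap.ext fun x => ?_) hc h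
  have commute_one : h 1 * g 1 = g 1 * h 1 := by
    simpa using congrArg unop ((mem_L_iff _).1 (end_one_mem h) _ (end_one_mem g))
  rw [Module.End.mul_apply, Module.End.mul_apply, end_apply_eq_mul g, end_apply_eq_mul h x,
    end_apply_eq_mul h (g x), end_apply_eq_mul g x, mul_assoc, mul_assoc, commute_one]

end Kaplansky

end CentralDivisionAlgebra

section StandardIdentity

/-- The coefficients of the standard polynomial `∑ σ, sign σ • X (σ 0) * ⋯ * X (σ (n - 1))`. -/
def standardCoeff (k : Type*) [Ring k] (n : ℕ) (σ : Equiv.Perm (Fin n)) : k :=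
  ((Equiv.Perm.sign σ : ℤ) : k)

lemma standardCoeff_ne_zero (k : Type*) [Ring k] [Nontrivial k] (n : ℕ) : standardCoeff k n ≠ 0 :=
  fun h => one_ne_zero (α := k) <| by simpa [standardCoeff] using congrFun h 1

lemma map_standardCoeff_smul {k k' A B : Type*} [CommRing k] [CommRing k'] [Ring A] [Ring B]
    [Algebra k A] [Algebra k' B] (φ : A →+* B) {n : ℕ} (σ : Equiv.Perm (Fin n)) (a : A) :
    φ (standardCoeff k n σ • a) = standardCoeff k' n σ • φ a := by
  simp only [standardCoeff, Int.cast_smul_eq_zsmul, map_zsmul]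

variable {k A : Type*} [CommRing k] [Ring A] [Algebra k A]

lemma multilinearEval_standardCoeff (n : ℕ) (v : Fin n → A) :
    multilinearEval A (standardCoeff k n) v =
      MultilinearMap.alternatization (MultilinearMap.mkPiAlgebraFin k n A) v := by
  simp [multilinearEval_apply, MultilinearMap.alternatization_apply, standardCoeff,
    Int.cast_smul_eq_zsmul, Units.smul_def, Function.comp_def]

theorem multilinearEval_standardCoeff_eq_zero_of_finrank_lt [IsDomain k] [Module.IsTorsionFree k A]
    [Module.Finite k A] {n : ℕ} (hn : Module.finrank k A < n) :
    multilinearEval A (standardCoeff k n) = 0 := by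
  ext v
  rw [multilinearEval_standardCoeff, zero_apply]
  refine AlternatingMap.map_linearDependent _ v fun independent => hn.not_ge ?_
  simpa using independent.fintype_card_le_finrank

end StandardIdentity

section PolynomialIdentity

variable {k A : Type*} [CommRing k] [Ring A] [Algebra k A]

lemma freeAlgebraLift_multilinearEval {n : ℕ} (c : Equiv.Perm (Fin n) → k) (v : Fin n → A) :
    FreeAlgebra.lift k v (multilinearEval (FreeAlgebra k (Fin n)) c (FreeAlgebra.ι k)) =
      multilinearEval A c v := by
  conv_rhs => rw [← FreeAlgebra.ι_comp_lift (R := k) v]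
  exact map_multilinearEval (FreeAlgebra.lift k v : FreeAlgebra k (Fin n) →+* A)
    (fun σ a => map_smul (FreeAlgebra.lift k v) (c σ) a) (FreeAlgebra.ι k)

lemma multilinearEval_freeAlgebra_ne_zero {n : ℕ} {c : Equiv.Perm (Fin n) → k} (hc : c ≠ 0) :
    multilinearEval (FreeAlgebra k (Fin n)) c (FreeAlgebra.ι k) ≠ 0 := by
  contrapose! hc
  have ofFn_injective : Function.Injective fun σ : Equiv.Perm (Fin n) =>
      FreeMonoid.ofList (List.ofFn σ) := fun σ τ h => DFunLike.coe_injective (List.ofFn_injective h)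
  have monomials_linearIndependent :=
    (FreeAlgebra.basisFreeMonoid k (Fin n)).linearIndependent.comp _ ofFn_injective
  refine funext (Fintype.linearIndependent_iff.1 monomials_linearIndependent c ?_)
  simpa only [multilinearEval_apply, Function.comp_apply, basisFreeMonoid_apply,
    FreeMonoid.toList_ofList, List.map_ofFn] using hc

theorem isPIAlgebra_of_multilinearEval_eq_zero {n : ℕ} (hn : 0 < n) {c : Equiv.Perm (Fin n) → k}
    (hc : c ≠ 0) (h : multilinearEval A c = 0) : IsPIAlgebra k A :=
  ⟨n, hn, _, multilinearEval_freeAlgebra_ne_zero hc, fun v => by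
    rw [freeAlgebraLift_multilinearEval, h, zero_apply]⟩

end PolynomialIdentity

section DivisionRing

instance isCentral_subringCenter (Q : Type*) [DivisionRing Q] :
    Algebra.IsCentral (Subring.center Q) Q where
  out x hx := Algebra.mem_bot.2
    ⟨⟨x, Subring.mem_center_iff.2 (Subalgebra.mem_center_iff.1 hx)⟩, rfl⟩

lemma exists_multilinearEval_standardCoeff_eq_zero {E : Type*} [DivisionRing E]
    (hE : IsCentrallyFinite E) :
    ∃ n, 0 < n ∧ multilinearEval E (standardCoeff (Subring.center E) n) = 0 :=
  have : Module.Finite (Subring.center E) E := hE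
  ⟨_, Nat.succ_pos _, multilinearEval_standardCoeff_eq_zero_of_finrank_lt (Nat.lt_succ_self _)⟩

theorem isCentrallyFinite_of_ringHom {E Q : Type*} [DivisionRing E] [DivisionRing Q] (φ : E →+* Q)
    (hQ : IsCentrallyFinite Q) : IsCentrallyFinite E := by
  obtain ⟨n, -, standard⟩ := exists_multilinearEval_standardCoeff_eq_zero hQ
  exact finite_of_multilinearEval_eq_zero (standardCoeff_ne_zero _ n) <|
    multilinearEval_eq_zero_of_injective φ.injective (map_standardCoeff_smul φ) fun v _ => by
      rw [standard, zero_apply]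

variable {F D : Type*} [CommRing F] [DivisionRing D] [Algebra F D]

lemma adjoin_le_span_closure (S : Set D) :
    (Algebra.adjoin F S).toSubmodule ≤ Submodule.span F (Subfield.closure S : Set D) := by
  rw [Algebra.adjoin_eq_span]
  exact Submodule.span_mono
    (Submonoid.closure_le (S := (Subfield.closure S).toSubmonoid).2 Subfield.subset_closure)

theorem isPIAlgebra_adjoin {S : Set D} (h : IsCentrallyFinite (Subfield.closure S)) :
    IsPIAlgebra F (Algebra.adjoin F S) := by
  have : Nontrivial F := (algebraMap F D).domain_nontrivial
  obtain ⟨n, hn, standard⟩ := exists_multilinearEval_standardCoeff_eq_zero h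
  have closure_zero {v : Fin n → D} (hv : ∀ i, v i ∈ Subfield.closure S) :
      multilinearEval D (standardCoeff F n) v = 0 :=
    multilinearEval_eq_zero_of_mem_range (φ := (Subfield.closure S).subtype)
      (map_standardCoeff_smul _) standard fun i => ⟨⟨v i, hv i⟩, rfl⟩
  refine isPIAlgebra_of_multilinearEval_eq_zero hn (standardCoeff_ne_zero F n) ?_
  refine multilinearEval_eq_zero_of_injective
    (φ := ((Algebra.adjoin F S).val : Algebra.adjoin F S →+* D)) (c' := standardCoeff F n)
    Subtype.val_injective (map_standardCoeff_smul _) fun v hv => ?_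
  refine multilinearMap_eq_zero_of_mem_span _ (fun v => closure_zero) fun i => ?_
  obtain ⟨x, hx⟩ := hv i
  exact hx ▸ adjoin_le_span_closure S x.2

theorem isCentrallyFinite_closure_of_isPIAlgebra [FaithfulSMul F D] {A : Subalgebra F D}
    (h : IsPIAlgebra F A) : IsCentrallyFinite (Subfield.closure (A : Set D)) := by
  obtain ⟨m, -, f, hf, hfA⟩ := h
  obtain ⟨n, c, hc, hA⟩ := exists_multilinearEval_eq_zero hf hfA
  have closure_zero {v : Fin n → D} (hv : ∀ i, v i ∈ Subfield.closure (A : Set D)) :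
      multilinearEval D c v = 0 :=
    multilinearEval_eq_zero_of_mem_closure (A := A.toSubmonoid)
      (fun v hv => multilinearEval_eq_zero_of_mem_range (φ := (A.val : A →+* D))
        (fun _ _ => rfl) hA fun i => ⟨⟨v i, hv i⟩, rfl⟩) hv
  let c' (σ : Equiv.Perm (Fin n)) : Subring.center (Subfield.closure (A : Set D)) :=
    ⟨⟨algebraMap F D (c σ), Subfield.subset_closure (A.algebraMap_mem (c σ))⟩,
      Subring.mem_center_iff.2 fun q => Subtype.ext (Algebra.commutes (c σ) q.1).symm⟩
  have c'_ne_zero : c' ≠ 0 := fun h => hc <| funext fun σ =>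
    FaithfulSMul.algebraMap_injective F D <| by
      simpa [c'] using congrArg (fun z => (z.1 : D)) (congrFun h σ)
  refine finite_of_multilinearEval_eq_zero c'_ne_zero ?_
  refine multilinearEval_eq_zero_of_injective (φ := (Subfield.closure (A : Set D)).subtype)
    Subtype.val_injective (fun σ a => (Algebra.smul_def (c σ) a.1).symm) fun v hv =>
      closure_zero fun i => ?_
  obtain ⟨x, hx⟩ := hv i
  exact hx ▸ x.2

theorem weaklyLocallyFinite_iff_locallyPI_general (F D : Type*) [CommRing F] [DivisionRing D]
    [Algebra F D] [FaithfulSMul F D] : IsWeaklyLocallyFinite D ↔ IsLocallyPI F D := by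
  refine ⟨fun h S => isPIAlgebra_adjoin (h S), fun h S => ?_⟩
  have closure_le : Subfield.closure (S : Set D) ≤
      Subfield.closure (Algebra.adjoin F (S : Set D)) :=
    Subfield.closure_mono Algebra.subset_adjoin
  exact isCentrallyFinite_of_ringHom (Subring.inclusion closure_le)
    (isCentrallyFinite_closure_of_isPIAlgebra (h S))

end DivisionRing

/-- A division ring is weakly locally finite if and only if it is a locally PI
algebra over its center. -/
theorem weaklyLocallyFinite_iff_locallyPI (D : Type*) [DivisionRing D] :
    IsWeaklyLocallyFinite D ↔ IsLocallyPI (Subring.center D) D :=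
  weaklyLocallyFinite_iff_locallyPI_general (Subring.center D) D
end

section
/- A division ring D is locally finite if and only if D is both weakly locally finite and algebraic over its center. (In particular, the Kurosh Problem has an affirmative answer for weakly locally finite division rings.) -/
/-- A division ring is *algebraic over its center* if every element is a root of a
nonzero polynomial all of whose coefficients lie in the center. -/
def IsAlgebraicOverCenter (D : Type*) [DivisionRing D] : Prop :=
  ∀ x : D, ∃ p : Polynomial D, p ≠ 0 ∧ (∀ i, p.coeff i ∈ Subring.center D) ∧ p.eval x = 0

/-- A division ring `D` with center `F` is *locally finite* if for every finite subset
`S` of `D`, the division subring generated by `S ∪ F` is a finite-dimensional vector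
space over `F` (i.e. it is contained in the `F`-span of finitely many elements). -/
def IsLocallyFinite (D : Type*) [DivisionRing D] : Prop :=
  ∀ S : Finset D, ∃ T : Finset D,
    (Subfield.closure ((S : Set D) ∪ (Subring.center D : Set D)) : Set D) ⊆
      (Submodule.span (Subring.center D) (T : Set D) : Set D)

open scoped Pointwise IsMulCommutative

/-!
Let `F` be the center of `D`. If an element of the centralizer of a division subring `K` is a
`K`-combination of `K`-independent elements of that centralizer, then commuting the relation with
`K` shows that its coefficients are central. Hence `K` and its centralizer are linearly disjoint
over the center of `K`. As the centralizer contains `F`, a basis of `K` over its center is linearly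
independent over `F`, so it is finite if `K` lies in a finite-dimensional `F`-space.

Conversely, let `K` be spanned by `v₁, …, vₙ` over its center. Writing `1`, the products `vᵢ vⱼ` and
the given elements of `K` in terms of the `vᵢ` involves a finite set `c` of coefficients, which
commute with `K`. If `D` is algebraic over `F`, the commutative algebra `F[c]` is
finite-dimensional, so `∑ᵢ F[c] vᵢ` is a finite-dimensional `F`-subalgebra containing the given
elements, and by algebraicity it is closed under inversion.
-/

section Centralizer

variable {K A ι : Type*} [DivisionRing K] [Ring A] [Module K A] [IsScalarTower K A A]

variable (K A) in
/-- The centralizer of (the image of) a division ring `K` in a ring `A` on which `K` acts, as a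
vector space over the center of `K`. The image of `k : K` in `A` is written `k • 1`. -/
def centralizerSubmodule : Submodule (Subring.center K) A where
  carrier := {a | ∀ k : K, Commute (k • (1 : A)) a}
  add_mem' ha hb k := (ha k).add_right (hb k)
  zero_mem' _ := Commute.zero_right _
  smul_mem' z a ha k := by
    have hzk : (z : K) * k = k * z := (Subring.mem_center_iff.mp z.2 k).symm
    calc k • (1 : A) * (z : K) • a = (k * z) • a := by
          rw [smul_one_mul, smul_smul]
      _ = (z : K) • (k • (1 : A) * a) := by rw [← hzk, mul_smul, smul_one_mul]
      _ = (z : K) • a * k • (1 : A) := by rw [(ha k).eq, smul_mul_assoc]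

theorem mul_smul_one_eq_smul {a : A} (ha : a ∈ centralizerSubmodule K A) (k : K) :
    a * k • (1 : A) = k • a := by
  rw [← (ha k).eq, smul_one_mul]

theorem mem_span_center_of_mem_span {u : ι → A} (hu : LinearIndependent K u)
    (hcomm : ∀ i, u i ∈ centralizerSubmodule K A) {x : A} (hx : x ∈ centralizerSubmodule K A)
    (hspan : x ∈ Submodule.span K (Set.range u)) :
    x ∈ Submodule.span (Subring.center K) (Set.range u) := by
  obtain ⟨c, rfl⟩ := Finsupp.mem_span_range_iff_exists_finsupp.mp hspan
  have commutator_relation (k : K) : ∑ i ∈ c.support, (k * c i - c i * k) • u i = 0 := by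
    have hk := mul_smul_one_eq_smul hx k
    simp only [Finsupp.sum, Finset.sum_mul, Finset.smul_sum, smul_mul_assoc,
      mul_smul_one_eq_smul (hcomm _), smul_smul] at hk
    simp only [sub_smul, Finset.sum_sub_distrib, hk, sub_self]
  have coeff_mem_center (i) (hi : i ∈ c.support) : c i ∈ Subring.center K :=
    Subring.mem_center_iff.mpr fun k =>
      sub_eq_zero.mp (linearIndependent_iff'.mp hu _ _ (commutator_relation k) i hi)
  exact Submodule.sum_mem _ fun i hi =>
    Submodule.smul_mem _ (⟨c i, coeff_mem_center i hi⟩ : Subring.center K)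
      (Submodule.subset_span ⟨i, rfl⟩)

theorem linearIndependent_of_mem_centralizerSubmodule {u : ι → A}
    (hcomm : ∀ i, u i ∈ centralizerSubmodule K A) (hu : LinearIndependent (Subring.center K) u) :
    LinearIndependent K u := by
  obtain ⟨s, -, -, hmax, hs⟩ :=
    exists_linearIndepOn_extension (linearIndepOn_empty K u) (Set.empty_subset Set.univ)
  suffices h : ∀ i, i ∈ s by
    rwa [Set.eq_univ_of_forall h, linearIndepOn_univ_iff] at hs
  by_contra! h
  obtain ⟨i, hi⟩ := h
  have hspan : u i ∈ Submodule.span K (Set.range fun j : s => u j) := by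
    rw [← Set.image_eq_range]
    exact hmax ⟨i, trivial, rfl⟩
  have hcenter := mem_span_center_of_mem_span hs (fun j => hcomm j) (hcomm i) hspan
  rw [← Set.image_eq_range] at hcenter
  exact hu.notMem_span_image hi hcenter

theorem exists_linearMap_extending_dual_centralizerSubmodule
    (φ : Module.Dual (Subring.center K) (centralizerSubmodule K A)) :
    ∃ ψ : A →ₗ[K] K, ∀ a : centralizerSubmodule K A, ψ a = φ a := by
  let B := Module.Basis.ofVectorSpace (Subring.center K) (centralizerSubmodule K A)
  have hB : LinearIndependent K fun j => (B j : A) :=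
    linearIndependent_of_mem_centralizerSubmodule (fun j => (B j).2)
      (B.linearIndependent.map' (centralizerSubmodule K A).subtype (Submodule.ker_subtype _))
  obtain ⟨ψ, hψ⟩ := LinearMap.exists_extend
    ((Module.Basis.span hB).constr ℕ fun j => (φ (B j) : K))
  have hψB (j) : ψ (B j) = φ (B j) := by
    have h := LinearMap.congr_fun hψ (Module.Basis.span hB j)
    rw [Module.Basis.constr_basis, LinearMap.comp_apply, Submodule.subtype_apply,
      Module.Basis.span_apply] at h
    exact h
  have hψφ : ψ.restrictScalars (Subring.center K) ∘ₗ (centralizerSubmodule K A).subtype =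
      Algebra.linearMap (Subring.center K) K ∘ₗ φ := B.ext hψB
  exact ⟨ψ, LinearMap.congr_fun hψφ⟩

theorem linearIndependent_center_smul_one {b : ι → K}
    (hb : LinearIndependent (Subring.center K) b) :
    LinearIndependent (Subring.center A) fun i => b i • (1 : A) := by
  rw [linearIndependent_iff'] at hb ⊢
  intro s g hg i hi
  have hcentral (i) : (g i : A) ∈ centralizerSubmodule K A := fun k =>
    Subring.mem_center_iff.mp (g i).2 (k • 1)
  let a (i) : centralizerSubmodule K A := ⟨g i, hcentral i⟩
  have hrel : ∑ i ∈ s, b i • (a i : A) = 0 := by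
    rw [← hg]
    exact Finset.sum_congr rfl fun i _ => (mul_smul_one_eq_smul (hcentral i) (b i)).symm
  suffices h : a i = 0 from Subtype.ext (Submodule.mk_eq_zero _ _ |>.mp h)
  refine (Module.forall_dual_apply_eq_zero_iff (Subring.center K) _).mp fun φ => ?_
  obtain ⟨ψ, hψ⟩ := exists_linearMap_extending_dual_centralizerSubmodule φ
  refine hb s (fun i => φ (a i)) ?_ i hi
  calc ∑ i ∈ s, φ (a i) • b i = ∑ i ∈ s, b i * φ (a i) :=
        Finset.sum_congr rfl fun i _ => (Subring.mem_center_iff.mp (φ (a i)).2 (b i)).symm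
    _ = ψ (∑ i ∈ s, b i • (a i : A)) := by simp only [map_sum, map_smul, hψ, smul_eq_mul]
    _ = 0 := by rw [hrel, map_zero]

theorem moduleFinite_center_of_smul_one_mem [Nontrivial A] {W : Submodule (Subring.center A) A}
    (hW : W.FG) (hKW : ∀ k : K, k • (1 : A) ∈ W) : Module.Finite (Subring.center K) K := by
  let b := Module.Basis.ofVectorSpace (Subring.center K) K
  have hbW : LinearIndependent (Subring.center A) fun i => (⟨b i • 1, hKW (b i)⟩ : W) :=
    .of_comp W.subtype (linearIndependent_center_smul_one b.linearIndependent)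
  have := Module.Finite.iff_fg.mpr hW
  have := hbW.finite
  exact Module.Finite.of_basis b

end Centralizer

section Algebraic

variable {F A : Type*} [CommRing F] [Ring A] [Algebra F A]

theorem fg_adjoin_of_finite_of_commute {s : Set A} (hs : s.Finite)
    (hcomm : ∀ a ∈ s, ∀ b ∈ s, Commute a b) (hint : ∀ a ∈ s, IsIntegral F a) :
    (Subalgebra.toSubmodule (Algebra.adjoin F s)).FG := by
  have := Algebra.isMulCommutative_adjoin F hcomm
  have hint_coe : ∀ a ∈ ((↑) : Algebra.adjoin F s → A) ⁻¹' s, IsIntegral F a := fun a ha =>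
    (isIntegral_algHom_iff (Algebra.adjoin F s).val Subtype.val_injective).mp (hint a ha)
  have hfg := fg_adjoin_of_finite (hs.preimage Subtype.val_injective.injOn) hint_coe
  rw [Algebra.adjoin_adjoin_coe_preimage, Algebra.top_toSubmodule] at hfg
  exact Module.Finite.iff_fg.mp ⟨hfg⟩

theorem exists_finite_subset_le_span_mul {s : Set A} {V W : Submodule F A} (hW : W.FG)
    (h : W ≤ Submodule.span F s * V) :
    ∃ c ⊆ s, c.Finite ∧ W ≤ Submodule.span F c * V := by
  have exists_subset_mem (x) (hx : x ∈ W) :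
      ∃ c : Finset A, (c : Set A) ⊆ s ∧ x ∈ Submodule.span F (c : Set A) * V := by
    classical
    have hsV := h hx
    rw [← Submodule.span_eq V, Submodule.span_mul_span] at hsV
    obtain ⟨c, d, hc, hd, hcd⟩ := Submodule.mem_span_mul_finite_of_mem_span_mul hsV
    rw [← Submodule.span_mul_span] at hcd
    exact ⟨c, hc, mul_le_mul' le_rfl (Submodule.span_le.mpr hd) hcd⟩
  choose! c hc hxc using exists_subset_mem
  obtain ⟨t, rfl⟩ := hW
  have ht : ∀ x ∈ t, x ∈ Submodule.span F (t : Set A) := fun x hx => Submodule.subset_span hx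
  refine ⟨⋃ x ∈ t, c x, Set.iUnion₂_subset fun x hx => hc x (ht x hx),
    t.finite_toSet.biUnion fun x _ => (c x).finite_toSet, Submodule.span_le.mpr fun x hx => ?_⟩
  have hcx := Submodule.span_mono (R := F)
    (Set.subset_biUnion_of_mem (u := fun x => (c x : Set A)) hx)
  exact mul_le_mul' hcx le_rfl (hxc x (ht x hx))

theorem exists_fg_subalgebra_of_subset_span_mul {z : Set A}
    (hz : ∀ a ∈ z, ∀ b ∈ z, Commute a b) (hint : ∀ a ∈ z, IsIntegral F a) {V : Submodule F A}
    (hV : V.FG) (hVz : ∀ v ∈ V, ∀ a ∈ z, Commute v a) (hVV : V * V ≤ Submodule.span F z * V)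
    (hone : 1 ∈ Submodule.span F z * V) {s : Set A} (hs : s.Finite)
    (hsV : ∀ a ∈ s, a ∈ Submodule.span F z * V) :
    ∃ B : Subalgebra F A, (Subalgebra.toSubmodule B).FG ∧ s ⊆ B := by
  obtain ⟨c, hcz, hc, hle⟩ := exists_finite_subset_le_span_mul
    ((hV.mul hV).sup (Submodule.fg_span (hs.insert 1)))
    (sup_le hVV (Submodule.span_le.mpr (Set.insert_subset hone hsV)))
  let C := Subalgebra.toSubmodule (Algebra.adjoin F c)
  have hC : C.FG := fg_adjoin_of_finite_of_commute hc
    (fun a ha b hb => hz a (hcz ha) b (hcz hb)) fun a ha => hint a (hcz ha)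
  have hCC : C * C = C := (Algebra.adjoin F c).isIdempotentElem_toSubmodule
  have hVC : V * C = C * V := Submodule.mul_comm_of_commute fun v hv a ha =>
    Algebra.commute_of_mem_adjoin_of_forall_mem_commute ha fun b hb => hVz v hv b (hcz hb)
  have hcC : Submodule.span F c * V ≤ C * V := mul_le_mul' (Algebra.span_le_adjoin F c) le_rfl
  obtain ⟨hVV_le, hspan_le⟩ := sup_le_iff.mp (hle.trans hcC)
  obtain ⟨hone_mem, hs_subset⟩ := Set.insert_subset_iff.mp (Submodule.span_le.mp hspan_le)
  have hmul : C * V * (C * V) ≤ C * V :=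
    calc C * V * (C * V) = C * (V * C) * V := by simp only [mul_assoc]
      _ = C * C * (V * V) := by rw [hVC]; simp only [mul_assoc]
      _ ≤ C * C * (C * V) := by gcongr
      _ = C * V := by rw [← mul_assoc, hCC, hCC]
  refine ⟨(C * V).toSubalgebra hone_mem fun x y hx hy => hmul (Submodule.mul_mem_mul hx hy),
    ?_, hs_subset⟩
  rw [Submodule.toSubalgebra_toSubmodule]
  exact hC.mul hV

theorem exists_fg_subalgebra_of_moduleFinite_center {E : Type*} [Ring E]
    [Module.Finite (Subring.center E) E] (f : E →+* A)
    (hint : ∀ z ∈ Subring.center E, IsIntegral F (f z)) {s : Set A} (hs : s.Finite)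
    (hsf : s ⊆ Set.range f) :
    ∃ B : Subalgebra F A, (Subalgebra.toSubmodule B).FG ∧ s ⊆ B := by
  obtain ⟨n, v, hv⟩ := Module.Finite.exists_fin (R := Subring.center E) (M := E)
  let z : Set A := f '' Subring.center E
  let V := Submodule.span F (Set.range (f ∘ v))
  have map_mem (x : E) : f x ∈ Submodule.span F z * V := by
    have hx : x ∈ Submodule.span (Subring.center E) (Set.range v) := hv ▸ Submodule.mem_top
    obtain ⟨r, rfl⟩ := (Submodule.mem_span_range_iff_exists_fun _).mp hx
    simp only [Subring.smul_def, smul_eq_mul, map_sum, map_mul]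
    exact Submodule.sum_mem _ fun i _ => Submodule.mul_mem_mul
      (Submodule.subset_span ⟨r i, (r i).2, rfl⟩) (Submodule.subset_span ⟨i, rfl⟩)
  have commute_z (x : E) : ∀ a ∈ z, Commute (f x) a := by
    rintro _ ⟨y, hy, rfl⟩
    exact Commute.map (Subring.mem_center_iff.mp hy x) f
  have V_le_centralizer : V ≤ Subalgebra.toSubmodule (Subalgebra.centralizer F z) :=
    Submodule.span_le.mpr <| Set.range_subset_iff.mpr fun i a ha => (commute_z (v i) a ha).symm
  refine exists_fg_subalgebra_of_subset_span_mul (z := z) ?_ ?_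
    (Submodule.fg_span (Set.finite_range _)) (fun x hx a ha => (V_le_centralizer hx a ha).symm)
    ?_ ?_ hs ?_
  · rintro _ ⟨x, -, rfl⟩
    exact commute_z x
  · rintro _ ⟨x, hx, rfl⟩
    exact hint x hx
  · rw [Submodule.span_mul_span, Submodule.span_le]
    rintro _ ⟨_, ⟨i, rfl⟩, _, ⟨j, rfl⟩, rfl⟩
    have h := map_mem (v i * v j)
    rwa [map_mul] at h
  · simpa only [map_one] using map_mem 1
  · intro a ha
    obtain ⟨x, rfl⟩ := hsf ha
    exact map_mem x

end Algebraic

section DivisionRing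

variable {D : Type*} [DivisionRing D]

theorem IsLocallyFinite.isWeaklyLocallyFinite (h : IsLocallyFinite D) :
    IsWeaklyLocallyFinite D := by
  intro S
  obtain ⟨T, hT⟩ := h S
  refine moduleFinite_center_of_smul_one_mem (Submodule.fg_span T.finite_toSet) fun k => hT ?_
  rw [Subfield.smul_def, smul_eq_mul, mul_one]
  exact Subfield.closure_mono Set.subset_union_left k.2

theorem subfieldClosure_subset_of_isAlgebraic {F : Type*} [Field F] [Algebra F D]
    [Algebra.IsAlgebraic F D] {B : Subalgebra F D} {s : Set D} (hs : s ⊆ B) :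
    (Subfield.closure s : Set D) ⊆ B := by
  let L : Subfield D :=
    { B.toSubring with
      inv_mem' _ := (Algebra.IsIntegral.isIntegral (R := F) _).inv_mem }
  exact Subfield.closure_le (t := L).mpr hs

theorem isAlgebraicOverCenter_iff :
    IsAlgebraicOverCenter D ↔ Algebra.IsAlgebraic (Subring.center D) D := by
  refine ⟨fun h => ⟨fun x => ?_⟩, fun h x => ?_⟩
  · obtain ⟨p, hp, hcoeff, hpx⟩ := h x
    obtain ⟨q, rfl⟩ := (Polynomial.mem_lifts p).mp <|
      (Polynomial.lifts_iff_coeff_lifts (f := algebraMap (Subring.center D) D) p).mpr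
        fun i => ⟨⟨_, hcoeff i⟩, rfl⟩
    exact ⟨q, fun hq => hp (by rw [hq, Polynomial.map_zero]),
      by rwa [Polynomial.eval_map_algebraMap] at hpx⟩
  · obtain ⟨p, hp, hpx⟩ := h.isAlgebraic x
    refine ⟨p.map (algebraMap (Subring.center D) D), ?_, fun i => ?_, ?_⟩
    · exact (Polynomial.map_ne_zero_iff Subtype.val_injective).mpr hp
    · rw [Polynomial.coeff_map]
      exact (p.coeff i).2
    · rwa [Polynomial.eval_map_algebraMap]

theorem IsLocallyFinite.isAlgebraicOverCenter (h : IsLocallyFinite D) :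
    IsAlgebraicOverCenter D := by
  refine isAlgebraicOverCenter_iff.mpr ⟨fun x => ?_⟩
  obtain ⟨T, hT⟩ := h {x}
  let B : Subalgebra (Subring.center D) D :=
    { (Subfield.closure ((({x} : Finset D) : Set D) ∪ Subring.center D)).toSubring with
      algebraMap_mem' := fun z => Subfield.subset_closure (Or.inr z.2) }
  have hB : (Subalgebra.toSubmodule B).FG := (Submodule.fg_span T.finite_toSet).of_le hT
  have hx : x ∈ B := Subfield.subset_closure (Or.inl (Finset.mem_singleton_self x))
  exact (IsIntegral.of_mem_of_fg B hB x hx).isAlgebraic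

theorem IsWeaklyLocallyFinite.isLocallyFinite (hw : IsWeaklyLocallyFinite D)
    (ha : IsAlgebraicOverCenter D) : IsLocallyFinite D := by
  intro S
  have := isAlgebraicOverCenter_iff.mp ha
  have : Module.Finite _ (Subfield.closure (S : Set D)) := hw S
  obtain ⟨B, ⟨T, hT⟩, hSB⟩ := exists_fg_subalgebra_of_moduleFinite_center (F := Subring.center D)
    (Subfield.closure (S : Set D)).subtype (fun z _ => Algebra.IsIntegral.isIntegral _)
    S.finite_toSet fun x hx => ⟨⟨x, Subfield.subset_closure hx⟩, rfl⟩
  refine ⟨T, ?_⟩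
  rw [hT]
  exact subfieldClosure_subset_of_isAlgebraic <|
    Set.union_subset hSB fun z hz => B.algebraMap_mem ⟨z, hz⟩

end DivisionRing

/-- A division ring is locally finite if and only if it is weakly locally finite and
algebraic over its center (the Kurosh Problem holds for weakly locally finite division
rings). -/
theorem locallyFinite_iff_weaklyLocallyFinite_and_algebraic (D : Type*)
    [DivisionRing D] :
    IsLocallyFinite D ↔ IsWeaklyLocallyFinite D ∧ IsAlgebraicOverCenter D := by
  exact ⟨fun h => ⟨h.isWeaklyLocallyFinite, h.isAlgebraicOverCenter⟩,
    fun ⟨hw, ha⟩ => hw.isLocallyFinite ha⟩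
end

section
/- Let D be a non-commutative division ring with center F which is weakly locally finite and algebraic over F, let n ≥ 1, and let N be a subgroup of GL_n(D) containing the group F*·I of nonzero central scalar matrices. Then N is not finitely generated. -/
/-!
A finitely generated subgroup of `GL_n(D)` generates a finitely generated subring of `M_n(D)`, so
suppose that such a subring contains the scalar matrices `F·I`. The entries of its generators,
together with two elements of `D` that do not commute, generate a subring `A` of `D`. It contains
`F`, over which `D` is algebraic, so `A` is closed under inverses: it is a division ring that is
finitely generated as a ring, and by weak local finiteness it is finite over its center. By the
Artin–Tate lemma the center is then finitely generated as a ring, so by the Nullstellensatz over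
`ℤ` it is a finite field. Hence `A` is finite, and Wedderburn's little theorem makes it
commutative, a contradiction.
-/

theorem isJacobsonRing_of_dimensionLEOne {R : Type*} [CommRing R] [Ring.DimensionLEOne R]
    (h : (⊥ : Ideal R).jacobson = ⊥) : IsJacobsonRing R := by
  refine isJacobsonRing_iff_prime_eq.2 fun P hP => ?_
  rcases eq_or_ne P ⊥ with rfl | hP0
  · exact h
  · have := hP.isMaximal hP0
    exact Ideal.jacobson_eq_self_of_isMaximal

theorem isJacobsonRing_int : IsJacobsonRing ℤ := by
  refine isJacobsonRing_of_dimensionLEOne (eq_bot_iff.2 fun x hx => ?_)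
  have hunit : IsUnit (x * x + 1) := Ideal.mem_jacobson_bot.1 hx x
  rw [Ideal.mem_bot]
  rcases Int.isUnit_iff.1 hunit with h | h <;> nlinarith

theorem finite_of_moduleFinite_int (K : Type*) [Field K] [Module.Finite ℤ K] : Finite K := by
  obtain ⟨p, _⟩ := CharP.exists K
  rcases eq_or_ne p 0 with rfl | hp
  · have := CharP.charP_to_charZero K
    exact absurd (isField_of_isIntegral_of_isField (algebraMap ℤ K).injective_int
      (Field.toIsField K)) Int.not_isField
  · have : NeZero p := ⟨hp⟩
    let := ZMod.algebra K p
    have := Module.Finite.of_restrictScalars_finite ℤ (ZMod p) K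
    exact Module.finite_of_finite (ZMod p)

theorem finite_of_finiteType_int (K : Type*) [Field K] [Algebra.FiniteType ℤ K] : Finite K := by
  have := isJacobsonRing_int
  have := finite_of_finite_type_of_isJacobsonRing ℤ K
  exact finite_of_moduleFinite_int K

-- Mathlib's Artin–Tate lemma `fg_of_fg_of_fg` requires `C` to be commutative.
theorem finiteType_of_finiteType_of_moduleFinite (A B C : Type*) [CommRing A] [IsNoetherianRing A]
    [CommRing B] [Ring C] [Algebra A B] [Algebra B C] [Algebra A C] [IsScalarTower A B C]
    [FaithfulSMul B C] [Algebra.FiniteType A C] [Module.Finite B C] : Algebra.FiniteType A B := by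
  obtain ⟨B₀, hB₀, hC⟩ := exists_subalgebra_of_fg A B C Algebra.FiniteType.out Module.Finite.fg_top
  have : IsNoetherianRing B₀ := isNoetherianRing_of_fg hB₀
  have : Module.Finite B₀ C := ⟨hC⟩
  have : Module.Finite B₀ B := Module.Finite.of_injective
    (IsScalarTower.toAlgHom B₀ B C).toLinearMap (FaithfulSMul.algebraMap_injective B C)
  have : Algebra.FiniteType A B₀ := ⟨B₀.fg_top.2 hB₀⟩
  exact Algebra.FiniteType.trans (S := B₀) inferInstance inferInstance

theorem IsCentrallyFinite.finite_of_finiteType {E : Type*} [DivisionRing E]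
    (hE : IsCentrallyFinite E) [Algebra.FiniteType ℤ E] : Finite E := by
  have : Module.Finite (Subring.center E) E := hE
  have := finiteType_of_finiteType_of_moduleFinite ℤ (Subring.center E) E
  have := finite_of_finiteType_int (Subring.center E)
  exact Module.finite_of_finite (Subring.center E)

section DivisionRing

variable {D : Type*} [DivisionRing D]

theorem IsWeaklyLocallyFinite.finite_of_fg (hD : IsWeaklyLocallyFinite D) {K : Subfield D}
    (hK : (subalgebraOfSubring K.toSubring).FG) : Finite K := by
  have : Algebra.FiniteType ℤ K := ⟨(Subalgebra.fg_top _).2 hK⟩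
  obtain ⟨S, hS⟩ := hK
  have hclosure : Subfield.closure (S : Set D) = K := by
    have hring : Subring.closure (S : Set D) = K.toSubring := by
      rw [Algebra.adjoin_int] at hS
      exact congrArg Subalgebra.toSubring hS
    refine le_antisymm (Subfield.closure_le.2 ?_) ?_
    · exact Subring.closure_le.1 hring.le
    · exact hring.ge.trans (Subfield.subring_closure_le _)
  have hfin : IsCentrallyFinite K := hclosure ▸ hD S
  exact hfin.finite_of_finiteType

theorem IsAlgebraicOverCenter.isAlgebraic (hD : IsAlgebraicOverCenter D) :
    Algebra.IsAlgebraic (Subring.center D) D := by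
  refine ⟨fun x => ?_⟩
  obtain ⟨p, hp0, hpc, hpx⟩ := hD x
  obtain ⟨q, rfl⟩ : ∃ q : Polynomial (Subring.center D), q.map (algebraMap _ D) = p :=
    (Polynomial.lifts_iff_coeff_lifts p).2 fun i => ⟨⟨p.coeff i, hpc i⟩, rfl⟩
  refine ⟨q, ?_, ?_⟩
  · rintro rfl
    exact hp0 (Polynomial.map_zero _)
  · rwa [Polynomial.aeval_def, Polynomial.eval₂_eq_eval_map]

theorem inv_mem_of_center_le [Algebra.IsAlgebraic (Subring.center D) D] {A : Subring D}
    (hA : Subring.center D ≤ A) {x : D} (hx : x ∈ A) : x⁻¹ ∈ A := by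
  let B : Subalgebra (Subring.center D) D :=
    { A with algebraMap_mem' := fun α => hA α.2 }
  exact (Algebra.IsAlgebraic.isAlgebraic x).isIntegral.inv_mem (A := B) hx

theorem mul_comm_of_center_le_of_fg (hwlf : IsWeaklyLocallyFinite D)
    (halg : IsAlgebraicOverCenter D) {A : Subalgebra ℤ D} (hA : A.FG)
    (hcenter : Subring.center D ≤ A.toSubring) (a b : D) : a * b = b * a := by
  let B : Subalgebra ℤ D := A ⊔ Algebra.adjoin ℤ {a, b}
  have hB : B.FG := hA.sup (Subalgebra.fg_def.2 ⟨{a, b}, Set.toFinite _, rfl⟩)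
  have hab : {a, b} ⊆ (B : Set D) := Algebra.adjoin_le_iff.1 le_sup_right
  have hcenterB : Subring.center D ≤ B.toSubring :=
    hcenter.trans fun _ hx => (le_sup_left : A ≤ B) hx
  have := halg.isAlgebraic
  let K : Subfield D := { B.toSubring with inv_mem' := fun _ => inv_mem_of_center_le hcenterB }
  have : Finite K := hwlf.finite_of_fg (K := K) hB
  have hcomm := (Finite.isDomain_to_isField K).mul_comm
    ⟨a, hab (Set.mem_insert a {b})⟩ ⟨b, hab (Set.mem_insert_of_mem a rfl)⟩
  exact congrArg Subtype.val hcomm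

end DivisionRing

theorem exists_fg_le_matrix {R A ι : Type*} [CommSemiring R] [Semiring A] [Algebra R A] [Fintype ι]
    [DecidableEq ι] {M : Subalgebra R (Matrix ι ι A)} (hM : M.FG) :
    ∃ B : Subalgebra R A, B.FG ∧ M ≤ B.matrix := by
  obtain ⟨T, rfl⟩ := hM
  let entries : Set A := ⋃ g ∈ T, ⋃ i, Set.range (g i)
  have hentries : entries.Finite :=
    T.finite_toSet.biUnion fun g _ => Set.finite_iUnion fun i => Set.finite_range (g i)
  refine ⟨Algebra.adjoin R entries, Subalgebra.fg_def.2 ⟨entries, hentries, rfl⟩, ?_⟩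
  refine Algebra.adjoin_le fun g hg i j => Algebra.subset_adjoin ?_
  exact Set.mem_biUnion hg (Set.mem_iUnion_of_mem i ⟨j, rfl⟩)

theorem fg_adjoin_units_of_fg (R : Type*) {A : Type*} [CommSemiring R] [Semiring A] [Algebra R A]
    {N : Subgroup Aˣ} (hN : N.FG) : (Algebra.adjoin R (Units.val '' (N : Set Aˣ))).FG := by
  obtain ⟨T, hT⟩ := ((Subgroup.fg_iff_submonoid_fg N).1 hN).map (Units.coeHom A)
  have himage : Units.val '' (N : Set Aˣ) = Submonoid.closure (T : Set A) :=
    (congrArg SetLike.coe hT).symm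
  refine ⟨T, le_antisymm (Algebra.adjoin_mono ?_) (Algebra.adjoin_le ?_)⟩
  · exact himage ▸ Submonoid.subset_closure
  · rw [himage]
    exact Submonoid.closure_le (S := (Algebra.adjoin R (T : Set A)).toSubmonoid).2
      Algebra.subset_adjoin

theorem scalar_mem_adjoin_units (R : Type*) {D ι : Type*} [CommSemiring R] [DivisionRing D]
    [Algebra R D] [Fintype ι] [DecidableEq ι] {N : Subgroup (Matrix ι ι D)ˣ}
    (hN : ∀ u : (Matrix ι ι D)ˣ, (∃ α ∈ Subring.center D, u.val = Matrix.scalar ι α) → u ∈ N)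
    (α : D) (hα : α ∈ Subring.center D) :
    Matrix.scalar ι α ∈ Algebra.adjoin R (Units.val '' (N : Set (Matrix ι ι D)ˣ)) := by
  rcases eq_or_ne α 0 with rfl | hα0
  · rw [map_zero]
    exact zero_mem _
  · let u : (Matrix ι ι D)ˣ :=
      Units.map (Matrix.scalar ι : D →+* Matrix ι ι D).toMonoidHom (Units.mk0 α hα0)
    exact Algebra.subset_adjoin ⟨u, hN u ⟨α, hα, rfl⟩, rfl⟩

theorem subgroup_containing_central_scalars_not_fg_general {D ι : Type*} [DivisionRing D]
    [Fintype ι] [DecidableEq ι] [Nonempty ι]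
    (hnc : ∃ a b : D, a * b ≠ b * a) (hwlf : IsWeaklyLocallyFinite D)
    (halg : IsAlgebraicOverCenter D) (M : Subalgebra ℤ (Matrix ι ι D))
    (hcent : ∀ α ∈ Subring.center D, Matrix.scalar ι α ∈ M) : ¬ M.FG := by
  intro hM
  obtain ⟨a, b, hab⟩ := hnc
  obtain ⟨A, hA, hMA⟩ := exists_fg_le_matrix hM
  refine hab (mul_comm_of_center_le_of_fg hwlf halg hA (fun α hα => ?_) a b)
  obtain ⟨i⟩ := ‹Nonempty ι›
  simpa using hMA (hcent α hα) i i

/-- Let `D` be a non-commutative, weakly locally finite division ring, algebraic over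
its center `F`, `n ≥ 1`, and let `N` be a subgroup of `GL_n(D)` containing all central
scalar matrices `F*·I`. Then `N` is not finitely generated. -/
theorem subgroup_containing_central_scalars_not_fg (D : Type*) [DivisionRing D]
    (hnc : ∃ a b : D, a * b ≠ b * a) (hwlf : IsWeaklyLocallyFinite D)
    (halg : IsAlgebraicOverCenter D) (n : ℕ) (hn : 1 ≤ n)
    (N : Subgroup (Matrix (Fin n) (Fin n) D)ˣ)
    (hcent : ∀ u : (Matrix (Fin n) (Fin n) D)ˣ,
      (∃ α ∈ Subring.center D,
        u.val = Matrix.scalar (Fin n) α) → u ∈ N) :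
    ¬ N.FG := by
  have : Nonempty (Fin n) := ⟨⟨0, hn⟩⟩
  exact fun hN => subgroup_containing_central_scalars_not_fg_general hnc hwlf halg _
    (scalar_mem_adjoin_units ℤ hcent) (fg_adjoin_units_of_fg ℤ hN)
end

section
/- Let D be a weakly locally finite division ring with center F and let K be a proper division subring of D (K ≠ D). Then every normal subgroup N of the multiplicative group D* that is radical over K is contained in F. -/
/-!
Let `a` be an element of the normal subgroup.

If `c`, `b * c * b⁻¹` and `(b + 1) * c * (b + 1)⁻¹` lie in `K` but `b` does not, then `c` and `b`
commute, since otherwise `b` is a quotient of elements of `K`. Applied to powers of `a`, this shows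
that every element of `D` commutes with a power of `a`. Let `E` be the centrally finite division
ring generated by `a` and some `b`. Each commutator of `E` involving `a` lies in the normal subgroup
as well, hence has a power in the center of `E`; as it has norm `1`, it is torsion.

This forces `a` to be central in `E`. Choose a valuation ring `A` of the center, a nonzero nonunit
`t` of `A` dividing no nonzero prime number, and an `A`-order `R` in `E`. For `x ∈ R` with
`a * x * a⁻¹ ∈ R`, the units `1 + t * x` and `1 + t * (a * x * a⁻¹)` of `R` have a quotient which is
a commutator, hence torsion, and which lies in `1 + t * R`. But `1 + t * R` has no torsion: if `c`
has prime order `p`, then `c - 1` divides `p`. So `a` commutes with `x`. If no such `A` and `t`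
exist, then the center is algebraic over a finite field, and `E` is commutative by Wedderburn's
little theorem.
-/

open scoped commutatorElement

/-- `t` divides no prime number that is nonzero in `R`. In a domain, this leaves no nontrivial
elements of finite order in the congruence subgroup `1 + tR`. -/
def DividesNoPrime {R : Type*} [Semiring R] (t : R) : Prop :=
  ∀ p : ℕ, p.Prime → (p : R) ≠ 0 → ¬ t ∣ (p : R)

section Torsion

-- `sub_one_dvd_natCast_of_pow_eq_one` without commutativity
theorem sub_one_dvd_natCast_of_pow_eq_one' {R : Type*} [Ring R] [NoZeroDivisors R] {c : R} {k : ℕ}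
    (hck : c ^ k = 1) (hc : c ≠ 1) : c - 1 ∣ (k : R) := by
  have hsum : ∑ i ∈ Finset.range k, c ^ i = 0 := by
    have h := mul_geom_sum c k
    rw [hck, sub_self] at h
    exact (mul_eq_zero.mp h).resolve_left (sub_ne_zero.mpr hc)
  have hdvd : c - 1 ∣ ∑ i ∈ Finset.range k, (c ^ i - 1) :=
    Finset.dvd_sum fun i _ => sub_one_dvd_pow_sub_one c i
  simpa [Finset.sum_sub_distrib, hsum] using hdvd

theorem eq_one_of_pow_char_eq_one {R : Type*} [Ring R] [IsReduced R] (p : ℕ) [Fact p.Prime]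
    [CharP R p] {c : R} (hc : c ^ p = 1) : c = 1 := by
  have h := sub_pow_char_of_commute p (Commute.one_right c)
  rw [hc, one_pow, sub_self] at h
  exact sub_eq_zero.mp (eq_zero_of_pow_eq_zero h)

theorem DividesNoPrime.eq_one_of_isOfFinOrder {R : Type*} [Ring R] [IsDomain R] {t c : R}
    (ht : DividesNoPrime t) (hc : IsOfFinOrder c) (htc : t ∣ c - 1) : c = 1 := by
  by_contra hc1
  obtain ⟨p, hp, hpc⟩ := Nat.exists_prime_and_dvd (mt orderOf_eq_one_iff.mp hc1)
  have : Fact p.Prime := ⟨hp⟩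
  set b := c ^ (orderOf c / p)
  have hb : orderOf b = p := orderOf_pow_orderOf_div hc.orderOf_pos.ne' hpc
  have hbp : b ^ p = 1 := hb ▸ pow_orderOf_eq_one b
  have hb1 : b ≠ 1 := fun h => hp.ne_one (by rw [← hb, h, orderOf_one])
  have htp : t ∣ (p : R) :=
    htc.trans <| (sub_one_dvd_pow_sub_one c _).trans <| sub_one_dvd_natCast_of_pow_eq_one' hbp hb1
  have hp0 : (p : R) = 0 := by_contra fun h => ht p hp h htp
  have : CharP R p := (CharP.charP_iff_prime_eq_zero hp).mpr hp0
  exact hb1 (eq_one_of_pow_char_eq_one p hbp)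

theorem DividesNoPrime.eq_of_isOfFinOrder_mul_inv {R : Type*} [Ring R] [IsDomain R] {t : R}
    (ht : DividesNoPrime t) {u v : Rˣ} (huv : IsOfFinOrder (u * v⁻¹)) (htuv : t ∣ (u : R) - v) :
    u = v := by
  have hdvd : t ∣ ((u * v⁻¹ : Rˣ) : R) - 1 := by
    simpa [sub_mul] using htuv.mul_right ((v⁻¹ : Rˣ) : R)
  exact mul_inv_eq_one.mp <|
    Units.ext (ht.eq_one_of_isOfFinOrder (Units.isOfFinOrder_val.mpr huv) hdvd)

end Torsion

section LeftMulOrder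

variable (A : Type*) {F D ι : Type*} [CommRing A] [Field F] [Algebra A F] [Ring D]
  [Algebra F D] [Algebra A D] [IsScalarTower A F D] [Fintype ι] [DecidableEq ι]
  (b : Module.Basis ι F D)

/-- The `A`-subalgebra of those elements of `D` whose left multiplication has entries in `A` with
respect to `b`. If `A` has fraction field `F`, it is an order in `D`. -/
noncomputable def leftMulOrder : Subalgebra A D :=
  (Algebra.ofId A F).mapMatrix.range.comap ((Algebra.leftMulMatrix b).restrictScalars A)

variable {A b}

theorem mem_leftMulOrder_iff_exists {x : D} :
    x ∈ leftMulOrder A b ↔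
      ∃ X : Matrix ι ι A, (Algebra.ofId A F).mapMatrix X = Algebra.leftMulMatrix b x :=
  Iff.rfl

theorem mem_leftMulOrder_iff {x : D} :
    x ∈ leftMulOrder A b ↔ ∀ i j, ∃ α : A, algebraMap A F α = Algebra.leftMulMatrix b x i j := by
  rw [mem_leftMulOrder_iff_exists]
  constructor
  · rintro ⟨X, hX⟩ i j
    exact ⟨X i j, congrFun₂ hX i j⟩
  · intro h
    choose X hX using h
    exact ⟨X, Matrix.ext hX⟩

instance finite_leftMulOrder [Finite A] : Finite (leftMulOrder A b) :=
  ((Set.finite_range (Algebra.ofId A F).mapMatrix).preimage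
    (Algebra.leftMulMatrix_injective b).injOn).to_subtype

theorem exists_ne_zero_forall_smul_mem_leftMulOrder [Nontrivial A] [IsFractionRing A F]
    {κ : Type*} [Finite κ] (x : κ → D) : ∃ d : A, d ≠ 0 ∧ ∀ k, d • x k ∈ leftMulOrder A b := by
  obtain ⟨d, hd⟩ := IsLocalization.exist_integer_multiples_of_finite (nonZeroDivisors A)
    fun q : κ × ι × ι => Algebra.leftMulMatrix b (x q.1) q.2.1 q.2.2
  refine ⟨d, nonZeroDivisors.ne_zero d.2, fun k => mem_leftMulOrder_iff.mpr fun i j => ?_⟩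
  rw [← algebraMap_smul F (d : A) (x k), map_smul, Matrix.smul_apply, algebraMap_smul]
  exact hd (k, i, j)

theorem DividesNoPrime.algebraMap_leftMulOrder [Nontrivial D] [FaithfulSMul A F] {t : A}
    (ht : DividesNoPrime t) : DividesNoPrime (algebraMap A (leftMulOrder A b) t) := by
  rintro p hp hp0 ⟨y, hy⟩
  obtain ⟨Y, hY⟩ := mem_leftMulOrder_iff_exists.mp y.2
  obtain ⟨i⟩ : Nonempty ι := b.index_nonempty
  have hpD : (p : D) = algebraMap A F t • (y : D) := by
    simpa [Algebra.smul_def, ← IsScalarTower.algebraMap_apply] using congrArg Subtype.val hy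
  have hpF : (p : F) = algebraMap A F (t * Y i i) := by
    have h := congrFun₂ (congrArg (Algebra.leftMulMatrix b) hpD) i i
    rw [map_smul, ← hY, map_natCast] at h
    simpa [Matrix.natCast_apply, Algebra.ofId_apply] using h
  have hpA : (p : A) = t * Y i i := FaithfulSMul.algebraMap_injective A F (by simpa using hpF)
  refine ht p hp (fun h0 => hp0 ?_) ⟨_, hpA⟩
  rw [← map_natCast (algebraMap A (leftMulOrder A b)), h0, map_zero]

end LeftMulOrder

section LeftMulOrderUnits

variable {A F D ι : Type*} [CommRing A] [Field F] [Algebra A F] [DivisionRing D]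
  [Algebra F D] [Algebra A D] [IsScalarTower A F D] [Fintype ι] [DecidableEq ι]
  {b : Module.Basis ι F D}

theorem isUnit_leftMulOrder_of_isUnit_matrix {x : leftMulOrder A b} {X : Matrix ι ι A}
    (hX : (Algebra.ofId A F).mapMatrix X = Algebra.leftMulMatrix b (x : D)) (hu : IsUnit X) :
    IsUnit x := by
  obtain ⟨W, hW⟩ := hu.exists_right_inv
  have hxW : Algebra.leftMulMatrix b (x : D) * (Algebra.ofId A F).mapMatrix W = 1 := by
    rw [← hX, ← map_mul, hW, map_one]
  have : Nonempty ι := b.index_nonempty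
  have hx0 : (x : D) ≠ 0 := fun h => by simp [h] at hxW
  have hinv : (x : D)⁻¹ ∈ leftMulOrder A b := by
    refine mem_leftMulOrder_iff_exists.mpr ⟨W, ?_⟩
    calc (Algebra.ofId A F).mapMatrix W
        = Algebra.leftMulMatrix b ((x : D)⁻¹ * x) * (Algebra.ofId A F).mapMatrix W := by
          rw [inv_mul_cancel₀ hx0, map_one, one_mul]
      _ = Algebra.leftMulMatrix b (x : D)⁻¹ := by rw [map_mul, mul_assoc, hxW, mul_one]
  exact ⟨⟨x, ⟨_, hinv⟩, Subtype.ext (mul_inv_cancel₀ hx0), Subtype.ext (inv_mul_cancel₀ hx0)⟩, rfl⟩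

theorem isUnit_one_add_smul_matrix [IsLocalRing A] {t : A} (ht : ¬ IsUnit t) (Y : Matrix ι ι A) :
    IsUnit (1 + t • Y) := by
  have hres : (IsLocalRing.residue A).mapMatrix (1 + t • Y) = 1 := by
    have ht0 : IsLocalRing.residue A t = 0 := (IsLocalRing.residue_eq_zero_iff t).mpr ht
    rw [map_add, map_one]
    ext i j
    simp [ht0]
  rw [Matrix.isUnit_iff_isUnit_det]
  refine isUnit_of_map_unit (IsLocalRing.residue A) _ ?_
  rw [RingHom.map_det, hres, Matrix.det_one]
  exact isUnit_one

theorem isUnit_one_add_smul_leftMulOrder [IsLocalRing A] {t : A} (ht : ¬ IsUnit t)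
    (y : leftMulOrder A b) : IsUnit (1 + t • y) := by
  obtain ⟨Y, hY⟩ := mem_leftMulOrder_iff_exists.mp y.2
  refine isUnit_leftMulOrder_of_isUnit_matrix ?_ (isUnit_one_add_smul_matrix ht Y)
  have h : (1 + t • y : leftMulOrder A b).1 = 1 + algebraMap A F t • (y : D) := by
    simp [algebraMap_smul]
  rw [h, map_add, map_add, map_one, map_one, map_smul, map_smul, hY, algebraMap_smul]

end LeftMulOrderUnits

section ValuationSubring

theorem exists_valuationSubring_not_isUnit {R F : Type*} [CommRing R] [Field F]
    {f : R →+* F} (hf : Function.Injective f) {t : R} (ht : ¬ IsUnit t) :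
    ∃ (V : ValuationSubring F) (π : V), (π : F) = f t ∧ ¬ IsUnit π := by
  let e : R ≃+* f.range := .ofBijective f.rangeRestrict
    ⟨fun _ _ h => hf (congrArg Subtype.val h), f.rangeRestrict_surjective⟩
  have het : ¬ IsUnit (e t) := by rwa [MulEquiv.isUnit_map]
  obtain ⟨V, -, hV⟩ := Ideal.image_subset_nonunits_valuationSubring (Ideal.span {e t})
    (by rwa [Ne, Ideal.span_singleton_eq_top])
  obtain ⟨htV, htm⟩ := ValuationSubring.mem_nonunits_iff_exists_mem_maximalIdeal.mp
    (hV ⟨e t, Ideal.mem_span_singleton_self _, rfl⟩)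
  exact ⟨V, ⟨f t, htV⟩, rfl, htm⟩

theorem dividesNoPrime_of_charP {R : Type*} [CommRing R] (p : ℕ) [Fact p.Prime] [CharP R p]
    {t : R} (ht : ¬ IsUnit t) : DividesNoPrime t := by
  intro q _ hq0 htq
  have hqu : IsUnit (q : R) := by
    rwa [CharP.isUnit_natCast_iff (p := p) Fact.out, ← CharP.cast_eq_zero_iff R p]
  exact ht (isUnit_of_dvd_unit htq hqu)

theorem dividesNoPrime_two_sq {R : Type*} [CommRing R] [IsDomain R] (h2 : ¬ IsUnit (2 : R)) :
    DividesNoPrime (2 ^ 2 : R) := by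
  intro p hp hp0 hdvd
  refine h2 (isUnit_of_dvd_one ?_)
  rcases hp.eq_two_or_odd' with rfl | ⟨r, rfl⟩
  · rw [Nat.cast_ofNat] at hp0 hdvd
    exact (mul_dvd_mul_iff_left hp0).mp (by rwa [← sq, mul_one])
  · have h := (dvd_pow_self (2 : R) two_ne_zero).trans hdvd
    push_cast at h
    exact (dvd_add_right (dvd_mul_right _ _)).mp h

theorem exists_valuationSubring_dividesNoPrime_of_charZero (F : Type*) [Field F] [CharZero F] :
    ∃ (V : ValuationSubring F) (t : V), t ≠ 0 ∧ ¬ IsUnit t ∧ DividesNoPrime t := by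
  obtain ⟨V, π, hπ, hπu⟩ := exists_valuationSubring_not_isUnit
    (f := Int.castRingHom F) Int.cast_injective (t := 2) (by decide)
  obtain rfl : π = 2 := Subtype.ext (by rw [hπ, map_ofNat]; rfl)
  -- `2` itself would not do, as it divides the prime number `2`.
  refine ⟨V, 2 ^ 2, pow_ne_zero 2 fun h => ?_, ?_, dividesNoPrime_two_sq hπu⟩
  · simp [h] at hπ
  · rwa [isUnit_pow_iff two_ne_zero]

theorem exists_valuationSubring_dividesNoPrime_of_transcendental {p : ℕ} [Fact p.Prime]
    {F : Type*} [Field F] [Algebra (ZMod p) F] {τ : F} (hτ : Transcendental (ZMod p) τ) :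
    ∃ (V : ValuationSubring F) (t : V), t ≠ 0 ∧ ¬ IsUnit t ∧ DividesNoPrime t := by
  obtain ⟨V, π, hπ, hπu⟩ := exists_valuationSubring_not_isUnit
    (f := (Polynomial.aeval τ : _ →ₐ[ZMod p] F).toRingHom)
    (transcendental_iff_injective.mp hτ) Polynomial.not_isUnit_X
  have : CharP F p := charP_of_injective_algebraMap' (ZMod p) p
  have : CharP V p := (V.subtype.charP_iff Subtype.val_injective p).mpr ‹_›
  refine ⟨V, π, ?_, hπu, dividesNoPrime_of_charP p hπu⟩
  rintro rfl
  have hτ0 : τ = 0 := by simpa using hπ.symm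
  exact hτ (hτ0 ▸ isAlgebraic_zero)

theorem exists_valuationSubring_dividesNoPrime_or_isAlgebraic (F : Type*) [Field F] :
    (∃ (V : ValuationSubring F) (t : V), t ≠ 0 ∧ ¬ IsUnit t ∧ DividesNoPrime t) ∨
      ∃ (p : ℕ) (_ : Fact p.Prime) (_ : Algebra (ZMod p) F), Algebra.IsAlgebraic (ZMod p) F := by
  obtain ⟨p, hp⟩ := CharP.exists F
  obtain hpp | rfl := CharP.char_is_prime_or_zero F p
  · have : Fact p.Prime := ⟨hpp⟩
    let : Algebra (ZMod p) F := ZMod.algebra F p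
    by_cases halg : Algebra.IsAlgebraic (ZMod p) F
    · exact .inr ⟨p, ‹_›, ‹_›, halg⟩
    · obtain ⟨τ, hτ⟩ := Algebra.transcendental_iff_not_isAlgebraic.mpr halg
      exact .inl (exists_valuationSubring_dividesNoPrime_of_transcendental hτ)
  · have := CharP.charP_to_charZero F
    exact .inl (exists_valuationSubring_dividesNoPrime_of_charZero F)

end ValuationSubring

section TorsionCommutators

variable {F D : Type*} [Field F] [DivisionRing D] [Algebra F D] [FiniteDimensional F D]

theorem commute_of_isOfFinOrder_commutator_of_isLocalRing (A : Type*) [CommRing A]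
    [IsLocalRing A] [Algebra A F] [IsFractionRing A F] [Algebra A D] [IsScalarTower A F D]
    {t : A} (ht0 : t ≠ 0) (htu : ¬ IsUnit t) (htp : DividesNoPrime t)
    {a : Dˣ} (ha : ∀ u : Dˣ, IsOfFinOrder ⁅u, a⁆) (x : D) : Commute (a : D) x := by
  let R := leftMulOrder A (Module.finBasis F D)
  obtain ⟨d, hd0, hd⟩ := exists_ne_zero_forall_smul_mem_leftMulOrder (A := A)
    (b := Module.finBasis F D) ![x, a * x * a⁻¹]
  let y : R := ⟨d • x, hd 0⟩
  let y' : R := ⟨d • (a * x * a⁻¹ : D), hd 1⟩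
  obtain ⟨u, hu⟩ := isUnit_one_add_smul_leftMulOrder htu y
  obtain ⟨v, hv⟩ := isUnit_one_add_smul_leftMulOrder htu y'
  let φ : Rˣ →* Dˣ := Units.map R.subtype
  have hφu : (φ u : D) = 1 + t • d • x := congrArg Subtype.val hu
  have hφv : (φ v : D) = 1 + t • d • (a * x * a⁻¹ : D) := congrArg Subtype.val hv
  have hconj : φ v = a * φ u * a⁻¹ := by
    ext
    simp [hφu, hφv, mul_add, add_mul]
  have hcomm : φ (u * v⁻¹) = ⁅φ u, a⁆ := by
    rw [map_mul, map_inv, hconj, commutatorElement_def]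
    group
  have hfin : IsOfFinOrder (u * v⁻¹) := by
    have hφ : Function.Injective φ := Units.map_injective Subtype.val_injective
    exact hφ.isOfFinOrder_iff.mp (hcomm ▸ ha _)
  have hdvd : algebraMap A R t ∣ (u : R) - v :=
    ⟨y - y', by rw [hu, hv, add_sub_add_left_eq_sub, ← smul_sub, Algebra.smul_def]⟩
  have huv : u = v := htp.algebraMap_leftMulOrder.eq_of_isOfFinOrder_mul_inv hfin hdvd
  have hax : t • d • x = t • d • (a * x * a⁻¹ : D) := by
    rwa [← huv, hφu, add_right_inj] at hφv
  have : IsDomain A := (IsFractionRing.injective A F).isDomain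
  have : Module.IsTorsionFree A D := .trans_faithfulSMul A F D
  have hx : x = a * x * a⁻¹ := smul_right_injective D hd0 (smul_right_injective D ht0 hax)
  exact (eq_mul_inv_iff_mul_eq₀ a.ne_zero |>.mp (by simpa using hx)).symm

theorem commute_of_isAlgebraic_of_finite (k : Type*) [Field k] [Finite k] [Algebra k F]
    [Algebra.IsAlgebraic k F] (x y : D) : Commute x y := by
  let b := Module.finBasis F D
  let entry (z : D) := fun ij : _ × _ => Algebra.leftMulMatrix b z ij.1 ij.2
  let s := Set.range (entry x) ∪ Set.range (entry y)
  let A := Algebra.adjoin k s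
  have hA : A.toSubmodule.FG :=
    fg_adjoin_of_finite ((Set.finite_range _).union (Set.finite_range _))
      fun α _ => Algebra.IsIntegral.isIntegral α
  have : Module.Finite k A := Module.Finite.iff_fg.mpr hA
  have : Finite A := Module.finite_of_finite k
  have hx : x ∈ leftMulOrder A b := mem_leftMulOrder_iff.mpr fun i j =>
    ⟨⟨_, Algebra.subset_adjoin (Or.inl ⟨(i, j), rfl⟩)⟩, rfl⟩
  have hy : y ∈ leftMulOrder A b := mem_leftMulOrder_iff.mpr fun i j =>
    ⟨⟨_, Algebra.subset_adjoin (Or.inr ⟨(i, j), rfl⟩)⟩, rfl⟩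
  exact congrArg Subtype.val
    ((Finite.isDomain_to_isField (leftMulOrder A b)).mul_comm ⟨x, hx⟩ ⟨y, hy⟩)

theorem commute_of_isOfFinOrder_commutator (F : Type*) {D : Type*} [Field F] [DivisionRing D]
    [Algebra F D] [FiniteDimensional F D] {a : Dˣ} (ha : ∀ u : Dˣ, IsOfFinOrder ⁅u, a⁆) (x : D) :
    Commute (a : D) x := by
  obtain ⟨V, t, ht0, htu, htp⟩ | ⟨p, _, _, _⟩ :=
    exists_valuationSubring_dividesNoPrime_or_isAlgebraic F
  · exact commute_of_isOfFinOrder_commutator_of_isLocalRing (F := F) V ht0 htu htp ha x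
  · exact commute_of_isAlgebraic_of_finite (F := F) (ZMod p) (a : D) x

theorem isOfFinOrder_commutator_of_pow_mem_range {u a : Dˣ} {m : ℕ} (hm : 0 < m)
    (h : ((⁅u, a⁆ : Dˣ) : D) ^ m ∈ (algebraMap F D).range) : IsOfFinOrder ⁅u, a⁆ := by
  obtain ⟨z, hz⟩ := h
  have hnorm : Algebra.norm F ((⁅u, a⁆ : Dˣ) : D) = 1 := by
    have h := map_commutatorElement (Units.map (Algebra.norm F (S := D))) u a
    exact congrArg Units.val (h.trans (commutatorElement_eq_one_iff_mul_comm.mpr (mul_comm _ _)))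
  have hzn : z ^ Module.finrank F D = 1 := by
    rw [← Algebra.norm_algebraMap (S := D), hz, map_pow, hnorm, one_pow]
  rw [← Units.isOfFinOrder_val, isOfFinOrder_iff_pow_eq_one]
  refine ⟨m * Module.finrank F D, Nat.mul_pos hm Module.finrank_pos, ?_⟩
  rw [pow_mul, ← hz, ← map_pow, hzn, map_one]

end TorsionCommutators

theorem IsCentrallyFinite.commute_of_pow_commutator_mem_center {E : Type*} [DivisionRing E]
    (hE : IsCentrallyFinite E) {a : Eˣ}
    (ha : ∀ u : Eˣ, ∃ m, 0 < m ∧ ((⁅u, a⁆ : Eˣ) : E) ^ m ∈ Subring.center E) (x : E) :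
    Commute (a : E) x := by
  have : Module.Finite (Subring.center E) E := hE
  refine commute_of_isOfFinOrder_commutator (Subring.center E) (fun u => ?_) x
  obtain ⟨m, hm, hmem⟩ := ha u
  exact isOfFinOrder_commutator_of_pow_mem_range (F := Subring.center E) hm ⟨⟨_, hmem⟩, rfl⟩

section Radical

theorem exists_pos_forall_pow_mem {ι M : Type*} [Finite ι] [Monoid M] {x : ι → M}
    {H : ι → Submonoid M} (h : ∀ i, ∃ m, 0 < m ∧ x i ^ m ∈ H i) :
    ∃ m, 0 < m ∧ ∀ i, x i ^ m ∈ H i := by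
  have := Fintype.ofFinite ι
  choose m hm hmem using h
  refine ⟨∏ i, m i, Finset.prod_pos fun i _ => hm i, fun i => ?_⟩
  obtain ⟨k, hk⟩ := Finset.dvd_prod_of_mem m (Finset.mem_univ i)
  rw [hk, pow_mul]
  exact pow_mem (hmem i) k

variable {D : Type*} [DivisionRing D]

theorem commute_of_mem_subfield_closure {s : Set D} {c y : D} (hc : ∀ x ∈ s, Commute c x)
    (hy : y ∈ Subfield.closure s) : Commute c y := by
  induction hy using Subfield.closure_induction with
  | mem x hx => exact hc x hx
  | one => exact .one_right c
  | add x y _ _ hx hy => exact hx.add_right hy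
  | neg x _ hx => exact hx.neg_right
  | inv x _ hx => exact hx.inv_right₀
  | mul x y _ _ hx hy => exact hx.mul_right hy

theorem exists_pow_commute_subfield_closure {s : Set D} (hs : s.Finite) {c : D}
    (hc : ∀ x ∈ s, ∃ m, 0 < m ∧ Commute (c ^ m) x) :
    ∃ m, 0 < m ∧ ∀ y ∈ Subfield.closure s, Commute (c ^ m) y := by
  have := hs.to_subtype
  obtain ⟨m, hm, hcm⟩ := exists_pos_forall_pow_mem (ι := s) (x := fun _ => c)
    (H := fun x => Submonoid.centralizer {(x : D)})
    (by simpa [Submonoid.mem_centralizer_iff, commute_iff_eq, eq_comm] using hc)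
  refine ⟨m, hm, fun y hy => commute_of_mem_subfield_closure (fun x hx => ?_) hy⟩
  exact (Submonoid.mem_centralizer_iff.mp (hcm ⟨x, hx⟩) x rfl).symm

theorem commute_of_semiconjBy_mem {K : Subfield D} {b c u v : D} (hb : b ∉ K) (hc : c ∈ K)
    (hu : u ∈ K) (hv : v ∈ K) (hbu : SemiconjBy b c u) (hbv : SemiconjBy (b + 1) c v) :
    Commute c b := by
  have huv : (v - u) * b = c - v := by
    have h : b * c + c = v * b + v := by simpa [add_mul, mul_add] using hbv.eq
    rw [sub_mul, ← hbu.eq, sub_eq_sub_iff_add_eq_add, ← h, add_comm]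
  have hvu : v - u = 0 := by
    by_contra h0
    have hbK : b = (v - u)⁻¹ * (c - v) := (eq_inv_mul_iff_mul_eq₀ h0).mpr huv
    exact hb (hbK ▸ mul_mem (inv_mem (sub_mem hv hu)) (sub_mem hc hv))
  have hcv : c = v := by
    rwa [hvu, zero_mul, eq_comm, sub_eq_zero] at huv
  rw [← sub_eq_zero.mp hvu, ← hcv] at hbu
  exact hbu.symm

theorem exists_pow_commute_of_notMem {K : Subfield D} {a : Dˣ}
    (ha : ∀ g : Dˣ, ∃ m, 0 < m ∧ ((g * a * g⁻¹ : Dˣ) : D) ^ m ∈ K) {b : D} (hb : b ∉ K) :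
    ∃ m, 0 < m ∧ Commute ((a : D) ^ m) b := by
  have hb0 : b ≠ 0 := fun h => hb (h ▸ K.zero_mem)
  have hb1 : b + 1 ≠ 0 := fun h => hb (eq_neg_of_add_eq_zero_left h ▸ neg_mem K.one_mem)
  obtain ⟨m, hm, hmem⟩ := exists_pos_forall_pow_mem (H := fun _ : Fin 3 => K.toSubmonoid)
    fun i => ha (![1, Units.mk0 b hb0, Units.mk0 (b + 1) hb1] i)
  have hconj (g : Dˣ) : SemiconjBy (g : D) ((a : D) ^ m) (((g * a * g⁻¹ : Dˣ) : D) ^ m) :=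
    (SemiconjBy.units_val (SemiconjBy.conj_mk g a)).pow_right m
  exact ⟨m, hm, commute_of_semiconjBy_mem hb (by simpa using hmem 0) (hmem 1) (hmem 2)
    (hconj (.mk0 b hb0)) (hconj (.mk0 (b + 1) hb1))⟩

theorem exists_pow_commute {K : Subfield D} (hK : K ≠ ⊤) {a : Dˣ}
    (ha : ∀ g : Dˣ, ∃ m, 0 < m ∧ ((g * a * g⁻¹ : Dˣ) : D) ^ m ∈ K) (y : D) :
    ∃ m, 0 < m ∧ Commute ((a : D) ^ m) y := by
  by_cases hy : y ∉ K
  · exact exists_pow_commute_of_notMem ha hy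
  obtain ⟨d, -, hd⟩ := SetLike.exists_of_lt hK.lt_top
  have hyd : y + d ∉ K := fun h => hd ((add_mem_cancel_left (not_not.mp hy)).mp h)
  obtain ⟨m, hm, hcomm⟩ := exists_pow_commute_subfield_closure (s := {d, y + d}) (by simp)
    (c := (a : D)) (by simpa using
      ⟨exists_pow_commute_of_notMem ha hd, exists_pow_commute_of_notMem ha hyd⟩)
  have hcd : Commute ((a : D) ^ m) d := hcomm d (Subfield.subset_closure (by simp))
  have hcyd : Commute ((a : D) ^ m) (y + d) := hcomm (y + d) (Subfield.subset_closure (by simp))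
  exact ⟨m, hm, by simpa using hcyd.sub_right hcd⟩

end Radical

/-- Let `D` be a weakly locally finite division ring with center `F` and `K` a proper
division subring of `D`. Then every normal subgroup of `D*` that is radical over `K`
is contained in `F`. -/
theorem normal_radical_over_proper_subring_is_central (D : Type*) [DivisionRing D]
    (h : IsWeaklyLocallyFinite D) (K : Subfield D) (hK : K ≠ ⊤)
    (N : Subgroup Dˣ) (hN : N.Normal)
    (hrad : ∀ x ∈ N, ∃ m : ℕ, 0 < m ∧ ((x : Dˣ) : D) ^ m ∈ K) :
    ∀ x ∈ N, ((x : Dˣ) : D) ∈ Subring.center D := by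
  classical
  intro a haN
  refine Subring.mem_center_iff.mpr fun b => ?_
  let S : Finset D := {(a : D), b}
  let E := Subfield.closure (S : Set D)
  let aE : E := ⟨a, Subfield.subset_closure (by simp [S])⟩
  let bE : E := ⟨b, Subfield.subset_closure (by simp [S])⟩
  let aU : Eˣ := Units.mk0 aE fun h0 => a.ne_zero (congrArg Subtype.val h0)
  suffices hab : Commute (aU : E) bE from (congrArg Subtype.val hab.eq).symm
  refine (h S).commute_of_pow_commutator_mem_center (fun u => ?_) bE
  let φ : Eˣ →* Dˣ := Units.map E.subtype
  have hφa : φ aU = a := Units.ext rfl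
  have hcN : φ ⁅u, aU⁆ ∈ N := by
    rw [map_commutatorElement, hφa]
    exact N.mul_mem (hN.conj_mem a haN _) (N.inv_mem haN)
  obtain ⟨m, hm, hcm⟩ := exists_pow_commute_subfield_closure S.finite_toSet fun y _ =>
    exists_pow_commute hK (fun g => hrad _ (hN.conj_mem _ hcN g)) y
  exact ⟨m, hm, Subring.mem_center_iff.mpr fun y => Subtype.ext (hcm y y.2).eq.symm⟩
end
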